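/- There is an absolute constant C > 0 such that the following holds. Let δ > 0, let s be a positive integer, and let f : ℕ → (0,1) be a decreasing function. For any graph G of density p > 0 and any equipartition P₀ of V(G) of order s, there exists a graph G' on V(G) with |E(G) △ E(G')| ≤ δ|E(G)| such that G' has an f-regular equipartition refining P₀ whose order is at most F^{(h)}(s), where F(x) = 2^{x/f(x)}, F^{(h)} denotes the h-fold iteration of F, and h = ⌈C·log(1/p)/δ²⌉. -/

import Mathlib

/-!
The proof runs an entropy increment over equipartitions `P` of the vertex set. The potential is
`ent`, the sum over ordered pairs of vertices of `d log d`, where `d` is the density of `G` between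
the parts of `P` containing the two vertices. With `n` the number of vertices, it lies between
`p n² log p` and `0` (`le_ent`, `ent_nonpos`), so it can grow by `δ² p n² / 256` at most
`256 log (1 / p) / δ²` times. Compared with the quadratic energy, this potential makes the number of
steps depend on `p` only through `log (1 / p)`.

Given `P` of order `k`, a weighted form of the Frieze–Kannan weak regularity lemma (`weak_reg`)
refines it to a colouring `c` with at most `k * 4 ^ T` classes, `T` polynomial in `k / f k`, such
that `G` is close in cut norm to its densities over `c`, even after multiplication by the factors
`scale` used below. Two cases arise, according to the `L¹` distance between the densities over `c`
and those over `P`.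

* If the distance is at most `δ p n² / 4`, then in each cell of `c` a uniform proportion of the
  edges or of the non-edges is changed so that the density becomes that of `P`. A derandomised
  Chernoff argument (`rounding`, `exists_rounded_graph`) turns this weighted graph into a graph `G'`
  for which every pair of parts of `P` is regular (`flatten`).
* Otherwise `c` is approximated by an equipartition `Q` refining `P`
  (`exists_equi_refinement`). The `L¹` distance survives up to a constant (`l1_transfer`), and a
  Pinsker-type inequality (`ent_increment`) bounds the gain in entropy from below.

One such step (`increment_step`) costs two applications of `F(x) = 2 ^ (x / f x)`. Before the first
one, `P₀` is refined to an equipartition of order at least `256` and `128 / (δ p)`, which costs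
`O(log (1 / p) / δ²)` further applications. This count needs `log (1 / p)` to be at least of order
`δ`; when it is smaller, or when `δ ≥ 1`, the complete or the empty graph serves as `G'`, and when
`n` is below the required bound the partition into singletons serves.
-/

open Finset
open scoped Classical

/-- `eCnt G A B` is the number of ordered pairs `(u,v) ∈ A × B` with `uv` an edge of `G`. -/
noncomputable def eCnt {V : Type*} [Fintype V] (G : SimpleGraph V) (A B : Finset V) : ℕ :=
  ((A ×ˢ B).filter fun p => G.Adj p.1 p.2).card

/-- The edge density `d_G(A,B)` between vertex subsets `A` and `B`. -/
noncomputable def dens {V : Type*} [Fintype V] (G : SimpleGraph V) (A B : Finset V) : ℝ :=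
  eCnt G A B / (A.card * B.card)

/-- The pair `(A,B)` is `ε`-regular. -/
def RegPair {V : Type*} [Fintype V] (G : SimpleGraph V) (ε : ℝ) (A B : Finset V) : Prop :=
  ∀ A' ⊆ A, ∀ B' ⊆ B, ε * A.card ≤ A'.card → ε * B.card ≤ B'.card →
    |dens G A B - dens G A' B'| ≤ ε

/-- The density `d_G = 2|E|/|V|²` of a graph. -/
noncomputable def graphDensity {V : Type*} [Fintype V] (G : SimpleGraph V) : ℝ :=
  2 * G.edgeSet.ncard / (Fintype.card V : ℝ) ^ 2


/-! ### Averaging over the classes of a colouring -/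

/-- The conditional expectation of `g` with respect to the partition of `X` into the fibres of the
colouring `c`: each value is replaced by the average over its colour class. -/
noncomputable def avg {X κ : Type*} [Fintype X] (c : X → κ) (g : X → ℝ) (x : X) : ℝ :=
  (∑ y with c y = c x, g y) / #{y | c y = c x}

lemma avg_card_pos {X κ : Type*} [Fintype X] (c : X → κ) (x : X) :
    (0 : ℝ) < #{y | c y = c x} := by
  have : 0 < #{y | c y = c x} := card_pos.2 ⟨x, by simp⟩
  exact_mod_cast this

lemma avg_congr {X κ : Type*} [Fintype X] (c : X → κ) (g : X → ℝ) {x y : X} (h : c x = c y) :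
    avg c g x = avg c g y := by
  simp only [avg, h]

lemma avg_nonneg {X κ : Type*} [Fintype X] (c : X → κ) (g : X → ℝ) (hg : ∀ x, 0 ≤ g x) (x : X) :
    0 ≤ avg c g x :=
  div_nonneg (sum_nonneg fun y _ => hg y) (avg_card_pos c x).le

lemma avg_le_one {X κ : Type*} [Fintype X] (c : X → κ) (g : X → ℝ) (hg : ∀ x, g x ≤ 1) (x : X) :
    avg c g x ≤ 1 := by
  rw [avg, div_le_one (avg_card_pos c x)]
  calc _ ≤ ∑ y with c y = c x, (1 : ℝ) := sum_le_sum fun y _ => hg y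
    _ = _ := by simp

/-- Conditional expectation is self-adjoint and fixes functions that are constant on classes. -/
lemma sum_avg_mul {X κ : Type*} [Fintype X] (c : X → κ) (g h : X → ℝ)
    (hh : ∀ x y, c x = c y → h x = h y) :
    ∑ x, avg c g x * h x = ∑ x, g x * h x := by
  have h1 : ∀ x, avg c g x * h x
      = ∑ y, if c y = c x then g y * (h y / #{z | c z = c y}) else 0 := by
    intro x
    rw [avg, sum_div, sum_mul, sum_filter]
    refine sum_congr rfl fun y _ => ?_
    split_ifs with hy
    · rw [hy, hh y x hy]; ring
    · rfl
  simp_rw [h1]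
  rw [sum_comm]
  refine sum_congr rfl fun y _ => ?_
  rw [← sum_filter, sum_const, nsmul_eq_mul]
  have h2 := avg_card_pos c y
  have h3 : (univ.filter fun x => c y = c x) = univ.filter fun x => c x = c y := by
    ext; simp [eq_comm]
  rw [h3]
  field_simp

lemma sum_avg {X κ : Type*} [Fintype X] (c : X → κ) (g : X → ℝ) :
    ∑ x, avg c g x = ∑ x, g x := by
  simpa using sum_avg_mul c g (fun _ => 1) (fun _ _ _ => rfl)

lemma avg_eq_zero {X κ κ' : Type*} [Fintype X] (c : X → κ) (c' : X → κ') (g : X → ℝ)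
    (hg : ∀ x, 0 ≤ g x) (hc : ∀ x y, c' x = c' y → c x = c y) {x : X} (h : avg c g x = 0) :
    avg c' g x = 0 := by
  rw [avg, div_eq_zero_iff] at h
  have h := h.resolve_right (avg_card_pos c x).ne'
  rw [sum_eq_zero_iff_of_nonneg fun y _ => hg y] at h
  rw [avg, sum_eq_zero, zero_div]
  intro y hy
  exact h y (by simpa using hc y x (by simpa using hy))

/-! ### Energy and entropy increments -/

/-- Pythagoras for a refinement `c'` of the colouring `c`. -/
lemma sum_sq_avg_sub {X κ κ' : Type*} [Fintype X] (c : X → κ) (c' : X → κ') (g : X → ℝ)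
    (hc : ∀ x y, c' x = c' y → c x = c y) :
    ∑ x, (avg c' g x - avg c g x) ^ 2 = ∑ x, avg c' g x ^ 2 - ∑ x, avg c g x ^ 2 := by
  have h1 := sum_avg_mul c g (avg c g) (fun x y h => avg_congr c g h)
  have h2 := sum_avg_mul c' g (avg c g) (fun x y h => avg_congr c g (hc x y h))
  have h3 : ∑ x, (avg c' g x - avg c g x) ^ 2
      = ∑ x, avg c' g x ^ 2 - 2 * ∑ x, avg c' g x * avg c g x + ∑ x, avg c g x * avg c g x := by
    rw [mul_sum, ← sum_sub_distrib, ← sum_add_distrib]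
    exact sum_congr rfl fun x _ => by ring
  have h4 : ∑ x, avg c g x ^ 2 = ∑ x, avg c g x * avg c g x :=
    sum_congr rfl fun x _ => by ring
  rw [h3, h4]; linarith

/-- The (negative) entropy of the averaged function. -/
noncomputable def ent {X κ : Type*} [Fintype X] (c : X → κ) (g : X → ℝ) : ℝ :=
  ∑ x, avg c g x * Real.log (avg c g x)

/-- The pointwise comparison of relative entropy with the Hellinger distance. -/
lemma hellinger_pointwise {a b : ℝ} (ha : 0 ≤ a) (hb : 0 ≤ b) (hab : b = 0 → a = 0) :
    (√a - √b) ^ 2 ≤ a * Real.log a - a * Real.log b - a + b := by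
  rcases ha.eq_or_lt with rfl | ha
  · simp [Real.sq_sqrt hb]
  have hb' : 0 < b := lt_of_le_of_ne hb fun h => ha.ne' (hab h.symm)
  have hsa := Real.sqrt_pos.2 ha
  have hsb := Real.sqrt_pos.2 hb'
  have h1 := Real.log_le_sub_one_of_pos (div_pos hsb hsa)
  rw [Real.log_div hsb.ne' hsa.ne', Real.log_sqrt ha.le, Real.log_sqrt hb] at h1
  have h2 : a * (√b / √a) = √a * √b := by
    field_simp
    nlinarith [Real.sq_sqrt ha.le]
  have h3 := mul_le_mul_of_nonneg_left h1 ha.le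
  have h4 : a * (√b / √a - 1) = √a * √b - a := by rw [mul_sub, h2]; ring
  rw [h4] at h3
  nlinarith [Real.sq_sqrt ha.le, Real.sq_sqrt hb]

/-- A Pinsker-type inequality: the entropy gained by refining `c` to `c'` controls the square of
the `L¹` distance of the two averages. -/
lemma ent_increment {X κ κ' : Type*} [Fintype X] (c : X → κ) (c' : X → κ') (g : X → ℝ)
    (hg : ∀ x, 0 ≤ g x) (hc : ∀ x y, c' x = c' y → c x = c y) :
    (∑ x, |avg c' g x - avg c g x|) ^ 2 ≤ 4 * (∑ x, g x) * (ent c' g - ent c g) := by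
  set a := avg c' g
  set b := avg c g
  have ha : ∀ x, 0 ≤ a x := avg_nonneg c' g hg
  have hb : ∀ x, 0 ≤ b x := avg_nonneg c g hg
  have h1 : ∑ x, a x * Real.log (b x) = ∑ x, b x * Real.log (b x) := by
    rw [sum_avg_mul c' g (fun x => Real.log (b x))
        (fun x y h => by simp only [b, avg_congr c g (hc x y h)]),
      sum_avg_mul c g (fun x => Real.log (b x)) (fun x y h => by simp only [b, avg_congr c g h])]
  have h2 : ∑ x, (√(a x) - √(b x)) ^ 2 ≤ ent c' g - ent c g := by
    calc ∑ x, (√(a x) - √(b x)) ^ 2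
        ≤ ∑ x, (a x * Real.log (a x) - a x * Real.log (b x) - a x + b x) :=
          sum_le_sum fun x _ => hellinger_pointwise (ha x) (hb x)
            fun h => avg_eq_zero c c' g hg hc h
      _ = _ := by
          rw [sum_add_distrib, sum_sub_distrib, sum_sub_distrib, h1, sum_avg, sum_avg, ent, ent]
          ring
  have h3 : ∑ x, (√(a x) + √(b x)) ^ 2 ≤ 4 * ∑ x, g x := by
    calc ∑ x, (√(a x) + √(b x)) ^ 2 ≤ ∑ x, (2 * a x + 2 * b x) := by
          refine sum_le_sum fun x _ => ?_
          nlinarith [Real.sq_sqrt (ha x), Real.sq_sqrt (hb x), sq_nonneg (√(a x) - √(b x))]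
      _ = _ := by
          rw [sum_add_distrib, ← mul_sum, ← mul_sum, sum_avg, sum_avg]; ring
  have h4 : ∑ x, |a x - b x| = ∑ x, |√(a x) - √(b x)| * (√(a x) + √(b x)) := by
    refine sum_congr rfl fun x _ => ?_
    have : a x - b x = (√(a x) - √(b x)) * (√(a x) + √(b x)) := by
      nlinarith [Real.sq_sqrt (ha x), Real.sq_sqrt (hb x)]
    rw [this, abs_mul, abs_of_nonneg (add_nonneg (Real.sqrt_nonneg _) (Real.sqrt_nonneg _))]
  rw [h4]
  refine (sum_mul_sq_le_sq_mul_sq _ _ _).trans ?_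
  simp only [sq_abs]
  rw [mul_comm (4 * _)]
  exact mul_le_mul h2 h3 (sum_nonneg fun x _ => sq_nonneg _)
    ((sum_nonneg fun x _ => sq_nonneg _).trans h2)

lemma ent_nonpos {X κ : Type*} [Fintype X] (c : X → κ) (g : X → ℝ)
    (hg : ∀ x, 0 ≤ g x) (hg1 : ∀ x, g x ≤ 1) : ent c g ≤ 0 :=
  sum_nonpos fun x _ => mul_nonpos_of_nonneg_of_nonpos (avg_nonneg c g hg x)
    (Real.log_nonpos (avg_nonneg c g hg x) (avg_le_one c g hg1 x))

/-- The entropy is smallest for the trivial partition. -/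
lemma le_ent {X κ : Type*} [Fintype X] (c : X → κ) (g : X → ℝ) (hg : ∀ x, 0 ≤ g x)
    (hpos : 0 < ∑ x, g x) :
    (∑ x, g x) * Real.log ((∑ x, g x) / Fintype.card X) ≤ ent c g := by
  have h1 := ent_increment (fun _ : X => ()) c g hg (fun _ _ _ => rfl)
  have h2 : 0 ≤ ent c g - ent (fun _ : X => ()) g :=
    nonneg_of_mul_nonneg_right ((sq_nonneg _).trans h1) (by linarith)
  have h3 : ent (fun _ : X => ()) g
      = (∑ x, g x) * Real.log ((∑ x, g x) / Fintype.card X) := by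
    have : ∀ x : X, avg (fun _ : X => ()) g x = (∑ x, g x) / Fintype.card X := by
      intro x; simp [avg, card_univ]
    have hX : (Fintype.card X : ℝ) ≠ 0 := by
      intro h
      have : Fintype.card X = 0 := by exact_mod_cast h
      have := Fintype.card_eq_zero_iff.1 this
      simp at hpos
    simp only [ent, this, sum_const, card_univ, nsmul_eq_mul]
    field_simp
  linarith

/-! ### Rounding a weighted graph -/

lemma bernoulli_mgf {w μ : ℝ} (h0 : 0 ≤ w) (h1 : w ≤ 1) (hμ : |μ| ≤ 1) :
    w * Real.exp (μ * (1 - w)) + (1 - w) * Real.exp (μ * (0 - w)) ≤ Real.exp (μ ^ 2) := by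
  have key : ∀ x : ℝ, |x| ≤ 1 → Real.exp x ≤ 1 + x + x ^ 2 := fun x hx => by
    have := abs_le.1 (Real.abs_exp_sub_one_sub_id_le hx)
    linarith [this.2]
  have e1 := key (μ * (1 - w)) (by
    rw [abs_mul, abs_of_nonneg (by linarith : 0 ≤ 1 - w)]; nlinarith [abs_nonneg μ])
  have e2 := key (μ * (0 - w)) (by
    rw [abs_mul, zero_sub, abs_neg, abs_of_nonneg h0]; nlinarith [abs_nonneg μ])
  have e3 := Real.add_one_le_exp (μ ^ 2)
  have e4 : w * (1 - w) ≤ 1 := by nlinarith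
  have e5 : 0 ≤ 1 - w := by linarith
  calc _ ≤ w * (1 + μ * (1 - w) + (μ * (1 - w)) ^ 2)
        + (1 - w) * (1 + μ * (0 - w) + (μ * (0 - w)) ^ 2) := by gcongr
    _ = 1 + μ ^ 2 * (w * (1 - w)) := by ring
    _ ≤ 1 + μ ^ 2 * 1 := by gcongr
    _ ≤ _ := by linarith

/-- Derandomised Chernoff bound: rounding the coordinates one at a time, the sum of the
exponential moments of all the tests grows by a factor at most `exp (l ^ 2)` each time. -/
lemma rounding_aux {E I : Type*} [Fintype I] (a : I → E → ℝ) (ha : ∀ i e, |a i e| ≤ 1)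
    (w : E → ℝ) (hw0 : ∀ e, 0 ≤ w e) (hw1 : ∀ e, w e ≤ 1) (l : ℝ) (hl0 : 0 < l) (hl1 : l ≤ 1)
    (S : Finset E) :
    ∃ X : E → ℝ, (∀ e, X e = 0 ∨ X e = 1) ∧
      ∑ i, Real.exp (l * ∑ e ∈ S, a i e * (X e - w e))
        ≤ Fintype.card I * Real.exp (l ^ 2 * #S) := by
  induction S using Finset.induction_on with
  | empty => exact ⟨fun _ => 0, fun _ => Or.inl rfl, by simp⟩
  | insert e S he ih =>
    obtain ⟨X, hX, hb⟩ := ih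
    set t : I → ℝ := fun i => Real.exp (l * ∑ e ∈ S, a i e * (X e - w e)) with ht
    have hupd : ∀ z : ℝ, ∀ i,
        Real.exp (l * ∑ e' ∈ insert e S, a i e' * (Function.update X e z e' - w e'))
          = t i * Real.exp (l * a i e * (z - w e)) := by
      intro z i
      rw [sum_insert he, Function.update_self, ht, ← Real.exp_add]
      congr 1
      have : ∑ e' ∈ S, a i e' * (Function.update X e z e' - w e')
          = ∑ e' ∈ S, a i e' * (X e' - w e') := by
        refine sum_congr rfl fun e' h' => ?_
        rw [Function.update_of_ne (by rintro rfl; exact he h')]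
      rw [this]; ring
    have hmix : w e * ∑ i, t i * Real.exp (l * a i e * (1 - w e))
        + (1 - w e) * ∑ i, t i * Real.exp (l * a i e * (0 - w e))
          ≤ Fintype.card I * Real.exp (l ^ 2 * #(insert e S)) := by
      have h1 : ∀ i, w e * Real.exp (l * a i e * (1 - w e))
          + (1 - w e) * Real.exp (l * a i e * (0 - w e)) ≤ Real.exp (l ^ 2) := by
        intro i
        have hla : |l * a i e| ≤ l := by
          rw [abs_mul, abs_of_pos hl0]; exact mul_le_of_le_one_right hl0.le (ha i e)
        refine (bernoulli_mgf (hw0 e) (hw1 e) (hla.trans hl1)).trans (Real.exp_le_exp.2 ?_)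
        rw [← sq_abs (l * a i e)]
        exact pow_le_pow_left₀ (abs_nonneg _) hla 2
      calc _ = ∑ i, t i * (w e * Real.exp (l * a i e * (1 - w e))
            + (1 - w e) * Real.exp (l * a i e * (0 - w e))) := by
            rw [mul_sum, mul_sum, ← sum_add_distrib]
            exact sum_congr rfl fun i _ => by ring
        _ ≤ ∑ i, t i * Real.exp (l ^ 2) :=
            sum_le_sum fun i _ => mul_le_mul_of_nonneg_left (h1 i) (Real.exp_pos _).le
        _ = (∑ i, t i) * Real.exp (l ^ 2) := by rw [sum_mul]
        _ ≤ Fintype.card I * Real.exp (l ^ 2 * #S) * Real.exp (l ^ 2) := by gcongr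
        _ = _ := by
            rw [card_insert_of_notMem he, mul_assoc, ← Real.exp_add]
            push_cast; congr 2; ring
    have hor : ∑ i, t i * Real.exp (l * a i e * (1 - w e))
          ≤ Fintype.card I * Real.exp (l ^ 2 * #(insert e S)) ∨
        ∑ i, t i * Real.exp (l * a i e * (0 - w e))
          ≤ Fintype.card I * Real.exp (l ^ 2 * #(insert e S)) := by
      by_contra! hcon
      nlinarith [hw0 e, hw1 e, mul_nonneg (hw0 e) (sub_nonneg.2 hcon.1.le),
        mul_nonneg (sub_nonneg.2 (hw1 e)) (sub_nonneg.2 hcon.2.le),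
        lt_min hcon.1 hcon.2,
        mul_le_mul_of_nonneg_left (min_le_left (∑ i, t i * Real.exp (l * a i e * (1 - w e)))
          (∑ i, t i * Real.exp (l * a i e * (0 - w e)))) (hw0 e),
        mul_le_mul_of_nonneg_left (min_le_right (∑ i, t i * Real.exp (l * a i e * (1 - w e)))
          (∑ i, t i * Real.exp (l * a i e * (0 - w e)))) (sub_nonneg.2 (hw1 e))]
    have hX' : ∀ z : ℝ, (z = 0 ∨ z = 1) →
        ∀ e', Function.update X e z e' = 0 ∨ Function.update X e z e' = 1 := by
      intro z hz e'
      by_cases h : e' = e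
      · subst h; simpa using hz
      · rw [Function.update_of_ne h]; exact hX e'
    rcases hor with h | h
    · exact ⟨Function.update X e 1, hX' 1 (Or.inr rfl), by simpa only [hupd] using h⟩
    · exact ⟨Function.update X e 0, hX' 0 (Or.inl rfl), by simpa only [hupd] using h⟩

lemma rounding {E I : Type*} [Fintype E] [Fintype I] (a : I → E → ℝ) (ha : ∀ i e, |a i e| ≤ 1)
    (w : E → ℝ) (hw0 : ∀ e, 0 ≤ w e) (hw1 : ∀ e, w e ≤ 1) (l : ℝ) (hl0 : 0 < l) (hl1 : l ≤ 1)
    (M : ℝ) (hM : (Fintype.card I : ℝ) ≤ Real.exp M) :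
    ∃ X : E → ℝ, (∀ e, X e = 0 ∨ X e = 1) ∧
      ∀ i, ∑ e, a i e * (X e - w e) ≤ l * Fintype.card E + M / l := by
  obtain ⟨X, hX, hb⟩ := rounding_aux a ha w hw0 hw1 l hl0 hl1 univ
  refine ⟨X, hX, fun i => ?_⟩
  have h1 : Real.exp (l * ∑ e, a i e * (X e - w e)) ≤ Real.exp (M + l ^ 2 * Fintype.card E) := by
    rw [Real.exp_add]
    refine (single_le_sum (f := fun i => Real.exp (l * ∑ e, a i e * (X e - w e)))
      (fun i _ => (Real.exp_pos _).le) (mem_univ i)).trans (hb.trans ?_)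
    rw [card_univ]; gcongr
  have h2 := Real.exp_le_exp.1 h1
  have h3 : l * Fintype.card E + M / l = (M + l ^ 2 * Fintype.card E) / l := by
    field_simp; ring
  rw [h3, le_div_iff₀ hl0]; linarith

/-! ### A weak regularity lemma with weights -/

/-- Refining a colouring by two vertex sets on which the weighted deviation of `g` from its average
is large increases the energy. -/
lemma weak_reg_step {V ι : Type} [Fintype V] (c : V → ι) (g β : V × V → ℝ)
    (hβ : ∀ x, |β x| ≤ 1) (hm : ∀ x y, Prod.map c c x = Prod.map c c y → β x = β y)
    (ε : ℝ) (hε : 0 < ε) (A B : Finset V)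
    (hAB : ε * (Fintype.card V : ℝ) ^ 2
      ≤ |∑ x ∈ A ×ˢ B, β x * (g x - avg (Prod.map c c) g x)|) :
    ∃ c' : V → ι × Bool × Bool, (∀ u v, c' u = c' v → c u = c v) ∧
      ∑ x, avg (Prod.map c c) g x ^ 2 + ε ^ 2 * (Fintype.card V : ℝ) ^ 2
        ≤ ∑ x, avg (Prod.map c' c') g x ^ 2 := by
  set c' : V → ι × Bool × Bool := fun v => (c v, decide (v ∈ A), decide (v ∈ B)) with hc'
  have href : ∀ u v, c' u = c' v → c u = c v := fun u v h => congrArg Prod.fst h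
  have href2 : ∀ x y : V × V, Prod.map c' c' x = Prod.map c' c' y →
      Prod.map c c x = Prod.map c c y := by
    rintro ⟨x1, x2⟩ ⟨y1, y2⟩ h
    simp only [Prod.map_apply, Prod.mk.injEq] at h ⊢
    exact ⟨href _ _ h.1, href _ _ h.2⟩
  refine ⟨c', href, ?_⟩
  have hpy := sum_sq_avg_sub (Prod.map c c) (Prod.map c' c') g href2
  set F : V × V → ℝ := fun x => if x ∈ A ×ˢ B then β x else 0 with hF
  have hFm : ∀ x y : V × V, Prod.map c' c' x = Prod.map c' c' y → F x = F y := by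
    intro x y h
    have hb := hm x y (href2 x y h)
    have hmem : x ∈ A ×ˢ B ↔ y ∈ A ×ˢ B := by
      obtain ⟨x1, x2⟩ := x
      obtain ⟨y1, y2⟩ := y
      simp only [Prod.map_apply, Prod.mk.injEq, hc', decide_eq_decide] at h
      simp only [mem_product]
      rw [h.1.2.1, h.2.2.2]
    simp only [hF, hb, hmem]
  have h1 : ∑ x ∈ A ×ˢ B, β x * (g x - avg (Prod.map c c) g x)
      = ∑ x, (avg (Prod.map c' c') g x - avg (Prod.map c c) g x) * F x := by
    have h2 := sum_avg_mul (Prod.map c' c') g F hFm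
    have h3 : ∑ x ∈ A ×ˢ B, β x * (g x - avg (Prod.map c c) g x)
        = ∑ x, (g x - avg (Prod.map c c) g x) * F x := by
      simp only [hF, mul_ite, mul_zero]
      rw [← sum_filter, filter_mem_eq_inter, univ_inter]
      exact sum_congr rfl fun x _ => mul_comm _ _
    rw [h3]
    simp only [sub_mul, sum_sub_distrib, h2]
  have h4 := sum_mul_sq_le_sq_mul_sq univ
    (fun x => avg (Prod.map c' c') g x - avg (Prod.map c c) g x) F
  have h5 : ∑ x, F x ^ 2 ≤ (Fintype.card V : ℝ) ^ 2 := by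
    calc ∑ x, F x ^ 2 ≤ ∑ x : V × V, (1 : ℝ) := by
          refine sum_le_sum fun x _ => ?_
          simp only [hF]
          split_ifs
          · rw [← sq_abs]; exact pow_le_one₀ (abs_nonneg _) (hβ x)
          · simp
      _ = _ := by simp [card_univ, sq]
  rw [← h1, hpy] at h4
  set N := (Fintype.card V : ℝ) ^ 2
  set Δ := ∑ x, avg (Prod.map c' c') g x ^ 2 - ∑ x, avg (Prod.map c c) g x ^ 2 with hΔ
  have hΔ0 : 0 ≤ Δ := by rw [← hpy]; exact sum_nonneg fun _ _ => sq_nonneg _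
  have hN : 0 ≤ N := sq_nonneg _
  have h6 : (ε * N) ^ 2 ≤ Δ * N := by
    calc (ε * N) ^ 2 ≤ |∑ x ∈ A ×ˢ B, β x * (g x - avg (Prod.map c c) g x)| ^ 2 :=
          pow_le_pow_left₀ (by positivity) hAB 2
      _ ≤ Δ * ∑ x, F x ^ 2 := by rw [sq_abs]; exact h4
      _ ≤ Δ * N := by gcongr
  have h7 : ε ^ 2 * N ≤ Δ := by
    rcases hN.eq_or_lt with h | h
    · rw [← h]; simpa using hΔ0
    · nlinarith
  linarith

/-- A Frieze–Kannan type regularity lemma. The deviation `g - avg g` is small in cut norm even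
after multiplication by a weight depending on the current averages, because such a weight is
constant on the cells of the partition. -/
lemma weak_reg {V ι₀ : Type} [Fintype V] [Fintype ι₀] (c₀ : V → ι₀) (g : V × V → ℝ)
    (hg0 : ∀ x, 0 ≤ g x) (hg1 : ∀ x, g x ≤ 1) (b : ℝ → ℝ → ℝ)
    (hb : ∀ q p, 0 ≤ q → q ≤ 1 → 0 ≤ p → p ≤ 1 → |b q p| ≤ 1)
    (ε : ℝ) (hε : 0 < ε) (T : ℕ) (hT : 1 < T * ε ^ 2) :
    ∃ (ι : Type) (_ : Fintype ι) (c : V → ι), Fintype.card ι ≤ Fintype.card ι₀ * 4 ^ T ∧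
      (∀ u v, c u = c v → c₀ u = c₀ v) ∧
      ∀ A B : Finset V, |∑ x ∈ A ×ˢ B,
        b (avg (Prod.map c c) g x) (avg (Prod.map c₀ c₀) g x) *
          (g x - avg (Prod.map c c) g x)| ≤ ε * (Fintype.card V : ℝ) ^ 2 := by
  by_contra hcon
  push Not at hcon
  have key : ∀ t : ℕ, t ≤ T → ∃ (ι : Type) (_ : Fintype ι) (c : V → ι),
      Fintype.card ι ≤ Fintype.card ι₀ * 4 ^ t ∧ (∀ u v, c u = c v → c₀ u = c₀ v) ∧
      t * ε ^ 2 * (Fintype.card V : ℝ) ^ 2 ≤ ∑ x, avg (Prod.map c c) g x ^ 2 := by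
    intro t
    induction t with
    | zero =>
      intro _
      exact ⟨ι₀, inferInstance, c₀, by simp, fun _ _ h => h,
        by simpa using sum_nonneg fun _ _ => sq_nonneg _⟩
    | succ t ih =>
      intro ht
      obtain ⟨ι, _, c, hcard, href, hen⟩ := ih (by omega)
      obtain ⟨A, B, hAB⟩ := hcon ι inferInstance c
        (hcard.trans (Nat.mul_le_mul_left _ (Nat.pow_le_pow_right (by norm_num) (by omega)))) href
      have href2 : ∀ x y : V × V, Prod.map c c x = Prod.map c c y →
          Prod.map c₀ c₀ x = Prod.map c₀ c₀ y := by
        rintro ⟨x1, x2⟩ ⟨y1, y2⟩ h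
        simp only [Prod.map_apply, Prod.mk.injEq] at h ⊢
        exact ⟨href _ _ h.1, href _ _ h.2⟩
      obtain ⟨c', hc', hen'⟩ := weak_reg_step c g
        (fun x => b (avg (Prod.map c c) g x) (avg (Prod.map c₀ c₀) g x))
        (fun x => hb _ _ (avg_nonneg _ g hg0 x) (avg_le_one _ g hg1 x)
          (avg_nonneg _ g hg0 x) (avg_le_one _ g hg1 x))
        (fun x y h => by
          simp only [avg_congr (Prod.map c c) g h, avg_congr (Prod.map c₀ c₀) g (href2 x y h)])
        ε hε A B hAB.le
      refine ⟨ι × Bool × Bool, inferInstance, c', ?_, fun u v h => href u v (hc' u v h), ?_⟩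
      · simp only [Fintype.card_prod, Fintype.card_bool, pow_succ]
        linarith
      · push_cast
        linarith
  obtain ⟨ι, _, c, hcard, href, hen⟩ := key T le_rfl
  have hle : ∑ x, avg (Prod.map c c) g x ^ 2 ≤ (Fintype.card V : ℝ) ^ 2 := by
    calc ∑ x, avg (Prod.map c c) g x ^ 2 ≤ ∑ x : V × V, (1 : ℝ) :=
          sum_le_sum fun x _ => pow_le_one₀ (avg_nonneg _ g hg0 x) (avg_le_one _ g hg1 x)
      _ = _ := by simp [card_univ, sq]
  obtain ⟨A, B, hAB⟩ := hcon ι inferInstance c hcard href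
  -- A violated test needs at least one vertex, which makes the energy bound contradictory.
  have hV : (0 : ℝ) < (Fintype.card V : ℝ) ^ 2 := by
    rcases isEmpty_or_nonempty V with h | h
    · simp [Finset.eq_empty_of_isEmpty] at hAB
    · have : 0 < Fintype.card V := Fintype.card_pos
      positivity
  nlinarith

/-! ### Approximating a partition by a refining equipartition -/

/-- Every equipartition `P` is refined by an equipartition with `r` times as many parts which is
almost a refinement of a given colouring `c` finer than `P`. -/
lemma exists_equi_refinement {V ι : Type} [Fintype V] [Fintype ι]
    (P : Finpartition (univ : Finset V)) (hP : P.IsEquipartition) (c : V → ι)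
    (hc : ∀ u v, c u = c v → P.part u = P.part v) (r : ℕ) (hr : 0 < r)
    (hn : P.parts.card * r ≤ Fintype.card V) (hk : 0 < P.parts.card) :
    ∃ Q : Finpartition (univ : Finset V), Q.IsEquipartition ∧ Q ≤ P ∧
      Q.parts.card = P.parts.card * r ∧
      #{v : V | ¬ ∀ u, Q.part u = Q.part v → c u = c v} * (P.parts.card * r)
        ≤ Fintype.card ι * Fintype.card V := by
  set k := P.parts.card with hkdef
  set n := Fintype.card V with hndef
  set m := n / (k * r) with hm
  have hm0 : m ≠ 0 := (Nat.div_pos hn (Nat.mul_pos hk hr)).ne'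
  have hcardA : ∀ A ∈ P.parts, r * m ≤ #A ∧ #A ≤ r * m + r := by
    intro A hA
    have h1 := hP.card_parts_eq_average hA
    rw [card_univ, ← hkdef, ← hndef] at h1
    have h2 : m = n / k / r := by rw [hm, Nat.div_div_eq_div_mul]
    have h3 := Nat.div_add_mod (n / k) r
    have h4 := Nat.mod_lt (n / k) hr
    rw [← h2] at h3
    omega
  have hsz : ∀ A ∈ P.parts, (r - (#A - r * m)) * m + (#A - r * m) * (m + 1) = #A := by
    intro A hA
    obtain ⟨h1, h2⟩ := hcardA A hA
    obtain ⟨d, hd⟩ := Nat.exists_eq_add_of_le h1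
    obtain ⟨e, he⟩ := Nat.exists_eq_add_of_le (show d ≤ r by omega)
    have h5 : #A - r * m = d := by omega
    have h6 : r - d = e := by omega
    rw [h5, h6, hd]
    conv_rhs => rw [he]
    ring
  set S : ∀ A ∈ P.parts, Finpartition A := fun A hA =>
    (Finpartition.ofSetSetoid (Setoid.ker c) A).equitabilise (hsz A hA) with hS
  set Q := P.bind S with hQ
  have hQpart : ∀ {B}, B ∈ Q.parts → #B = m ∨ #B = m + 1 := by
    intro B hB
    obtain ⟨A, hA, hB⟩ := Finpartition.mem_bind.1 hB
    exact Finpartition.card_eq_of_mem_parts_equitabilise hB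
  refine ⟨Q, Set.equitableOn_iff_exists_eq_eq_add_one.2 ⟨m, fun B hB => hQpart hB⟩, ?_, ?_, ?_⟩
  · intro B hB
    obtain ⟨A, hA, hB⟩ := Finpartition.mem_bind.1 hB
    exact ⟨A, hA, Finpartition.le _ hB⟩
  · rw [hQ, Finpartition.card_bind]
    have : ∀ A ∈ P.parts.attach, #(S A.1 A.2).parts = r := by
      intro A _
      rw [hS, Finpartition.card_parts_equitabilise _ _ hm0]
      have := hcardA A.1 A.2
      omega
    rw [sum_congr rfl this]
    simp [hkdef]
  · set U := univ.filter fun v : V => ¬ ∀ u, Q.part u = Q.part v → c u = c v with hU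
    have hfib : ∀ i : ι, #{v ∈ U | c v = i} ≤ m := by
      intro i
      rcases (U.filter fun v => c v = i).eq_empty_or_nonempty with h | ⟨v₀, hv₀⟩
      · rw [h]; simp
      have hv₀i : c v₀ = i := (mem_filter.1 hv₀).2
      set A := P.part v₀ with hAdef
      have hA : A ∈ P.parts := by simp [hAdef]
      set x : Finset V := {v ∈ A | c v = i} with hx
      have hxp : x ∈ (Finpartition.ofSetSetoid (Setoid.ker c) A).parts := by
        simp only [Finpartition.ofSetSetoid, mem_image]
        refine ⟨v₀, by simp [hAdef], ?_⟩
        ext v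
        simp only [mem_filter, hx]
        rw [← hv₀i]
        simp [eq_comm]
      refine le_trans (card_le_card ?_)
        (Finpartition.card_parts_equitabilise_subset_le _ (hsz A hA) hxp)
      intro v hv
      obtain ⟨hvU, hvi⟩ := mem_filter.1 hv
      have hvA : v ∈ A := by
        have h1 : P.part v = P.part v₀ := hc v v₀ (hvi.trans hv₀i.symm)
        rw [hAdef, ← h1]; simp
      refine mem_sdiff.2 ⟨mem_filter.2 ⟨hvA, hvi⟩, fun hmem => ?_⟩
      obtain ⟨y, hy, hvy⟩ := mem_biUnion.1 hmem
      obtain ⟨hyS, hyx⟩ := mem_filter.1 hy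
      refine (mem_filter.1 hvU).2 fun u hu => ?_
      have hyQ : y ∈ Q.parts := Finpartition.mem_bind.2 ⟨A, hA, hyS⟩
      have h1 : Q.part v = y := Q.part_eq_of_mem hyQ hvy
      have h2 : u ∈ y := by rw [← h1, ← hu]; simp
      rw [(mem_filter.1 (hyx h2)).2, hvi]
    have hUc : #U ≤ Fintype.card ι * m := by
      have h1 := card_eq_sum_card_fiberwise (f := c) (s := U) (t := univ) (fun _ _ => by simp)
      rw [h1]
      calc _ ≤ ∑ _i : ι, m := sum_le_sum fun i _ => hfib i
        _ = _ := by simp [card_univ]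
    calc #U * (k * r) ≤ Fintype.card ι * m * (k * r) := Nat.mul_le_mul_right _ hUc
      _ = Fintype.card ι * (m * (k * r)) := by ring
      _ ≤ Fintype.card ι * n := Nat.mul_le_mul_left _ (Nat.div_mul_le_self _ _)

/-! ### Flattening the densities of a graph -/

/-- The adjacency indicator of `G` on ordered pairs. -/
noncomputable def adjFn {V : Type} (G : SimpleGraph V) (x : V × V) : ℝ :=
  if G.Adj x.1 x.2 then 1 else 0

lemma adjFn_nonneg {V : Type} (G : SimpleGraph V) (x : V × V) : 0 ≤ adjFn G x := by
  rw [adjFn]; split_ifs <;> norm_num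

lemma adjFn_le_one {V : Type} (G : SimpleGraph V) (x : V × V) : adjFn G x ≤ 1 := by
  rw [adjFn]; split_ifs <;> norm_num

/-- The block densities of `G` with respect to the colouring `c`, as a function on pairs. -/
noncomputable def bd {V ι : Type} [Fintype V] (G : SimpleGraph V) (c : V → ι) (x : V × V) : ℝ :=
  avg (Prod.map c c) (adjFn G) x

lemma bd_nonneg {V ι : Type} [Fintype V] (G : SimpleGraph V) (c : V → ι) (x : V × V) :
    0 ≤ bd G c x := avg_nonneg _ _ (adjFn_nonneg G) x

lemma bd_le_one {V ι : Type} [Fintype V] (G : SimpleGraph V) (c : V → ι) (x : V × V) :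
    bd G c x ≤ 1 := avg_le_one _ _ (adjFn_le_one G) x

lemma bd_congr {V ι : Type} [Fintype V] (G : SimpleGraph V) (c : V → ι) {x y : V × V}
    (h1 : c x.1 = c y.1) (h2 : c x.2 = c y.2) : bd G c x = bd G c y :=
  avg_congr _ _ (Prod.ext h1 h2)

lemma bd_eq_div {V ι : Type} [Fintype V] (G : SimpleGraph V) (c : V → ι) (u v : V) :
    bd G c (u, v) = (∑ x ∈ (univ.filter fun a => c a = c u) ×ˢ (univ.filter fun a => c a = c v),
      adjFn G x) / ((#{a | c a = c u} : ℝ) * #{a | c a = c v}) := by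
  have h : @Finset.filter (V × V) (fun y => Prod.map c c y = Prod.map c c (u, v))
      (fun _ => Classical.propDecidable _) univ
      = (univ.filter fun a => c a = c u) ×ˢ (univ.filter fun a => c a = c v) := by
    ext ⟨a, b⟩; simp
  rw [bd, avg, h, card_product]; push_cast; rfl

lemma adjFn_swap {V : Type} (G : SimpleGraph V) (u v : V) :
    adjFn G (u, v) = adjFn G (v, u) := by
  simp only [adjFn, G.adj_comm]

lemma bd_swap {V ι : Type} [Fintype V] (G : SimpleGraph V) (c : V → ι) (u v : V) :
    bd G c (u, v) = bd G c (v, u) := by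
  rw [bd_eq_div, bd_eq_div, mul_comm (#{a | c a = c u} : ℝ), sum_product, sum_product_right]
  simp only [adjFn_swap]

/-- The factor by which deviations from the density `q` are scaled when a cell of density `q` is
brought to density `p` by deleting a uniform proportion of the edges (if `p ≤ q`) or of the
non-edges (if `q < p`). -/
noncomputable def scale (q p : ℝ) : ℝ := if p ≤ q then p / q else (1 - p) / (1 - q)

lemma scale_nonneg {q p : ℝ} (hq0 : 0 ≤ q) (hq1 : q ≤ 1) (hp0 : 0 ≤ p) (hp1 : p ≤ 1) :
    0 ≤ scale q p := by
  rw [scale]; split_ifs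
  · positivity
  · exact div_nonneg (by linarith) (by linarith)

lemma scale_le_one {q p : ℝ} (hq0 : 0 ≤ q) (hp1 : p ≤ 1) : scale q p ≤ 1 := by
  rw [scale]; split_ifs with h
  · exact div_le_one_of_le₀ h hq0
  · exact div_le_one_of_le₀ (by linarith) (by linarith)

/-- The modified weight of a pair whose cell has density `q` and should get density `p`;
`a` is the original weight. -/
noncomputable def newWt (a q p : ℝ) : ℝ := p + scale q p * (a - q)

lemma newWt_of_le {a q p : ℝ} (hp0 : 0 ≤ p) (h : p ≤ q) : newWt a q p = scale q p * a := by
  rw [newWt, scale, if_pos h]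
  rcases eq_or_ne q 0 with rfl | hq
  · have : p = 0 := le_antisymm h hp0
    simp [this]
  · field_simp; ring

lemma newWt_of_lt {a q p : ℝ} (hp1 : p ≤ 1) (h : q < p) :
    newWt a q p = 1 - scale q p * (1 - a) := by
  rw [newWt, scale, if_neg h.not_ge]
  have : 1 - q ≠ 0 := by linarith
  field_simp; ring

lemma newWt_mem {a q p : ℝ} (ha0 : 0 ≤ a) (ha1 : a ≤ 1) (hq0 : 0 ≤ q) (hq1 : q ≤ 1)
    (hp0 : 0 ≤ p) (hp1 : p ≤ 1) : 0 ≤ newWt a q p ∧ newWt a q p ≤ 1 := by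
  have h0 := scale_nonneg hq0 hq1 hp0 hp1
  have h1 := scale_le_one hq0 hp1
  rcases le_or_gt p q with h | h
  · rw [newWt_of_le hp0 h]; constructor <;> nlinarith
  · rw [newWt_of_lt hp1 h]; constructor <;> nlinarith

/-- The total change of weight equals (and so is at most) the `L¹` distance of the densities:
within a cell all changes have the same sign. -/
lemma sum_abs_newWt_sub {V ι ι₀ : Type} [Fintype V] (G : SimpleGraph V) (c : V → ι)
    (c₀ : V → ι₀) (hc : ∀ u v, c u = c v → c₀ u = c₀ v) :
    ∑ x, |newWt (adjFn G x) (bd G c x) (bd G c₀ x) - adjFn G x|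
      ≤ ∑ x, |bd G c x - bd G c₀ x| := by
  set s : V × V → ℝ := fun x => 1 - scale (bd G c x) (bd G c₀ x) with hs
  set h : V × V → ℝ := fun x => if bd G c₀ x ≤ bd G c x then s x else - s x with hh
  set h' : V × V → ℝ := fun x => if bd G c₀ x ≤ bd G c x then 0 else s x with hh'
  have hs0 : ∀ x, 0 ≤ s x := fun x =>
    sub_nonneg.2 (scale_le_one (bd_nonneg G c x) (bd_le_one G c₀ x))
  have e1 : ∀ x, |newWt (adjFn G x) (bd G c x) (bd G c₀ x) - adjFn G x|
      = adjFn G x * h x + h' x := by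
    intro x
    have a0 := adjFn_nonneg G x
    have a1 := adjFn_le_one G x
    rcases le_or_gt (bd G c₀ x) (bd G c x) with hx | hx
    · rw [newWt_of_le (bd_nonneg G c₀ x) hx]
      simp only [hh, hh', if_pos hx]
      rw [abs_of_nonpos]
      · simp only [hs]; ring
      · have := mul_nonneg (hs0 x) a0
        simp only [hs] at this
        linarith
    · rw [newWt_of_lt (bd_le_one G c₀ x) hx]
      simp only [hh, hh', if_neg hx.not_ge]
      rw [abs_of_nonneg]
      · simp only [hs]; ring
      · have := mul_nonneg (hs0 x) (sub_nonneg.2 a1)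
        simp only [hs] at this
        linarith
  have e2 : ∀ x, bd G c x * h x + h' x = |bd G c x - bd G c₀ x| := by
    intro x
    have e3 : bd G c₀ x = newWt (bd G c x) (bd G c x) (bd G c₀ x) := by simp [newWt]
    rcases le_or_gt (bd G c₀ x) (bd G c x) with hx | hx
    · rw [newWt_of_le (bd_nonneg G c₀ x) hx] at e3
      rw [abs_of_nonneg (sub_nonneg.2 hx)]
      simp only [hh, hh', if_pos hx, hs]
      linarith
    · rw [newWt_of_lt (bd_le_one G c₀ x) hx] at e3
      rw [abs_of_neg (sub_neg.2 hx)]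
      simp only [hh, hh', if_neg hx.not_ge, hs]
      linarith
  have hm : ∀ x y : V × V, Prod.map c c x = Prod.map c c y → h x = h y := by
    intro x y hxy
    have h1 : c x.1 = c y.1 := congrArg Prod.fst hxy
    have h2 : c x.2 = c y.2 := congrArg Prod.snd hxy
    simp only [hh, hs, bd_congr G c h1 h2, bd_congr G c₀ (hc _ _ h1) (hc _ _ h2)]
  have e4 : ∑ x, bd G c x * h x = ∑ x, adjFn G x * h x := sum_avg_mul _ _ h hm
  refine le_of_eq ?_
  calc _ = ∑ x, adjFn G x * h x + ∑ x, h' x := by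
        rw [← sum_add_distrib]; exact sum_congr rfl fun x _ => e1 x
    _ = ∑ x, bd G c x * h x + ∑ x, h' x := by rw [e4]
    _ = _ := by rw [← sum_add_distrib]; exact sum_congr rfl fun x _ => e2 x

lemma eCnt_eq_sum {V : Type} [Fintype V] (G : SimpleGraph V) (A B : Finset V) :
    (eCnt G A B : ℝ) = ∑ x ∈ A ×ˢ B, adjFn G x := by
  simp only [eCnt, adjFn, sum_boole]

/-- Rounding a symmetric weight `w` to a graph `G'` close to it in cut norm, whose distance from `G`
is governed by the `L¹` distance of `w` from `G`. -/
lemma exists_rounded_graph {V : Type} [Fintype V] (G : SimpleGraph V) (w : V → V → ℝ)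
    (hsymm : ∀ u v, w u v = w v u) (hw0 : ∀ u v, 0 ≤ w u v) (hw1 : ∀ u v, w u v ≤ 1)
    (η : ℝ) (hη0 : 0 < η) (hη1 : η ≤ 1) (hn : 16 / η ^ 2 ≤ Fintype.card V) :
    ∃ G' : SimpleGraph V,
      ((symmDiff G.edgeSet G'.edgeSet).ncard : ℝ)
        ≤ ∑ x : V × V, |w x.1 x.2 - adjFn G x| + η * (Fintype.card V : ℝ) ^ 2 ∧
      ∀ A B : Finset V, Disjoint A B →
        |(eCnt G' A B : ℝ) - ∑ x ∈ A ×ˢ B, w x.1 x.2| ≤ η * (Fintype.card V : ℝ) ^ 2 := by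
  set n := Fintype.card V with hndef
  have hnpos : (0 : ℝ) < n := lt_of_lt_of_le (by positivity) hn
  have hn1 : (1 : ℝ) ≤ n := by
    have : 0 < n := by exact_mod_cast hnpos
    exact_mod_cast this
  set W : Sym2 V → ℝ := Sym2.lift ⟨w, hsymm⟩ with hW
  set γ : Sym2 V → ℝ := fun e => if e ∈ G.edgeSet then 1 else 0 with hγ
  have hWmem : ∀ e, 0 ≤ W e ∧ W e ≤ 1 := by
    intro e
    induction e with
    | h u v => exact ⟨hw0 u v, hw1 u v⟩
  -- One test for each signed pair of vertex sets, and one for the number of changed pairs.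
  set a : (Finset V × Finset V × Bool) ⊕ Unit → Sym2 V → ℝ := fun i e =>
    match i with
    | Sum.inl (A, B, s) =>
        if e ∈ (A ×ˢ B).image (fun x : V × V => s(x.1, x.2)) then (if s then 1 else -1) else 0
    | Sum.inr _ => 1 - 2 * γ e with ha
  have habs : ∀ i e, |a i e| ≤ 1 := by
    rintro (⟨A, B, s⟩ | _) e
    · simp only [ha]; split_ifs <;> simp
    · simp only [ha, hγ]; split_ifs <;> norm_num
  have hI : (Fintype.card ((Finset V × Finset V × Bool) ⊕ Unit) : ℝ) ≤ Real.exp (4 * n) := by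
    have h1 : (Fintype.card ((Finset V × Finset V × Bool) ⊕ Unit) : ℝ)
        = 2 ^ n * (2 ^ n * 2) + 1 := by simp [hndef]
    have h2 : (2 : ℝ) ≤ Real.exp 1 := by linarith [Real.add_one_le_exp (1 : ℝ)]
    have h3 : (2 : ℝ) ^ n ≤ Real.exp n := by
      calc (2 : ℝ) ^ n ≤ Real.exp 1 ^ n := by gcongr
        _ = _ := by rw [← Real.exp_nat_mul, mul_one]
    have h4 : (2 : ℝ) ≤ Real.exp n := h2.trans (Real.exp_le_exp.2 hn1)
    have h5 : Real.exp (4 * n) = Real.exp n ^ 4 := by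
      rw [← Real.exp_nat_mul]; norm_num
    rw [h1, h5]
    have h6 : (1 : ℝ) ≤ 2 ^ n := one_le_pow₀ (by norm_num)
    have h7 : (2 : ℝ) ^ n * 2 ^ n ≤ Real.exp n * Real.exp n := by gcongr
    have h8 : (2 : ℝ) * 2 ≤ Real.exp n * Real.exp n := by gcongr
    have h9 : (2 : ℝ) ^ n * 2 ^ n * (2 * 2) ≤ (Real.exp n * Real.exp n) * (Real.exp n * Real.exp n) :=
      by gcongr
    nlinarith
  obtain ⟨X, hX, hdev⟩ := rounding a habs W (fun e => (hWmem e).1) (fun e => (hWmem e).2)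
    (η / 2) (by positivity) (by linarith) (4 * n) hI
  have hbound : η / 2 * (Fintype.card (Sym2 V) : ℝ) + 4 * n / (η / 2) ≤ η * (n : ℝ) ^ 2 := by
    have h1 : (Fintype.card (Sym2 V) : ℝ) ≤ (n : ℝ) ^ 2 := by
      have : Fintype.card (Sym2 V) ≤ Fintype.card (V × V) :=
        Fintype.card_le_of_surjective (fun x : V × V => s(x.1, x.2)) (fun e => by
          induction e with
          | h u v => exact ⟨(u, v), rfl⟩)
      rw [Fintype.card_prod, ← sq] at this
      exact_mod_cast this
    have h2 : 4 * (n : ℝ) / (η / 2) ≤ η / 2 * (n : ℝ) ^ 2 := by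
      rw [div_le_iff₀ (by positivity)]
      rw [div_le_iff₀ (by positivity)] at hn
      nlinarith
    have h3 : η / 2 * (Fintype.card (Sym2 V) : ℝ) ≤ η / 2 * (n : ℝ) ^ 2 := by gcongr
    linarith
  set G' : SimpleGraph V := SimpleGraph.fromEdgeSet {e | X e = 1} with hG'
  refine ⟨G', ?_, ?_⟩
  · have hsub : (symmDiff G.edgeSet G'.edgeSet) ⊆ ((univ.filter fun e => X e ≠ γ e : Finset (Sym2 V)) :
        Set (Sym2 V)) := by
      intro e he
      simp only [coe_filter, mem_univ, true_and, Set.mem_ofPred_eq]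
      rw [Set.mem_symmDiff] at he
      rcases he with ⟨h1, h2⟩ | ⟨h1, h2⟩
      · intro hXe
        refine h2 ?_
        rw [hG', SimpleGraph.edgeSet_fromEdgeSet]
        refine ⟨?_, G.not_isDiag_of_mem_edgeSet h1⟩
        simp [hXe, hγ, h1]
      · rw [hG', SimpleGraph.edgeSet_fromEdgeSet] at h1
        have h3 : X e = 1 := h1.1
        simp [h3, hγ, h2]
    have h1 : ((symmDiff G.edgeSet G'.edgeSet).ncard : ℝ) ≤ #{e | X e ≠ γ e} := by
      have := Set.ncard_le_ncard hsub (Finset.finite_toSet _)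
      rw [Set.ncard_coe_finset] at this
      exact_mod_cast this
    have h2 : (#{e | X e ≠ γ e} : ℝ) ≤ ∑ e, (1 - 2 * γ e) * (X e - γ e) := by
      rw [← sum_boole]
      refine sum_le_sum fun e _ => ?_
      have h3 : γ e = 0 ∨ γ e = 1 := by simp only [hγ]; split_ifs <;> simp
      rcases h3 with h3 | h3 <;> rcases hX e with h4 | h4 <;> simp [h3, h4] <;> norm_num
    have h3 : ∑ e, (1 - 2 * γ e) * (X e - γ e)
        = ∑ e, (1 - 2 * γ e) * (X e - W e) + ∑ e, (1 - 2 * γ e) * (W e - γ e) := by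
      rw [← sum_add_distrib]; exact sum_congr rfl fun e _ => by ring
    have h4 := hdev (Sum.inr ())
    simp only [ha] at h4
    have h5 : ∑ e, (1 - 2 * γ e) * (W e - γ e) ≤ ∑ e, |W e - γ e| := by
      refine sum_le_sum fun e _ => ?_
      simp only [hγ]
      split_ifs
      · linarith [neg_abs_le (W e - 1)]
      · linarith [le_abs_self (W e - 0)]
    have h6 : ∑ e, |W e - γ e| ≤ ∑ x : V × V, |w x.1 x.2 - adjFn G x| := by
      have h7 := sum_fiberwise (univ : Finset (V × V)) (fun x => s(x.1, x.2))
        (fun x => |w x.1 x.2 - adjFn G x|)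
      rw [← h7]
      refine sum_le_sum fun e _ => ?_
      induction e with
      | h u v =>
        have h8 : |W s(u, v) - γ s(u, v)| = |w u v - adjFn G (u, v)| := by
          simp [hW, hγ, adjFn]
        rw [h8]
        exact single_le_sum (f := fun x : V × V => |w x.1 x.2 - adjFn G x|)
          (fun x _ => abs_nonneg _) (by simp : (u, v) ∈ _)
    linarith
  · intro A B hAB
    have hinj : Set.InjOn (fun x : V × V => s(x.1, x.2)) (A ×ˢ B : Finset (V × V)) := by
      rintro ⟨u, v⟩ huv ⟨u', v'⟩ huv' h
      simp only [coe_product, Set.mem_prod, mem_coe] at huv huv'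
      simp only [Sym2.eq_iff] at h
      rcases h with ⟨rfl, rfl⟩ | ⟨rfl, rfl⟩
      · rfl
      · exact absurd huv'.2 (disjoint_left.1 hAB huv.1)
    have hsum : ∀ z : ℝ, ∑ e, (if e ∈ (A ×ˢ B).image (fun x : V × V => s(x.1, x.2)) then z else 0)
          * (X e - W e) = z * ((eCnt G' A B : ℝ) - ∑ x ∈ A ×ˢ B, w x.1 x.2) := by
      intro z
      simp only [ite_mul, zero_mul]
      rw [← sum_filter, filter_mem_eq_inter, univ_inter, sum_image hinj, ← mul_sum, sum_sub_distrib,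
        eCnt_eq_sum]
      congr 2
      refine sum_congr rfl ?_
      rintro ⟨u, v⟩ huv
      have hne : u ≠ v := by
        rintro rfl
        exact disjoint_left.1 hAB (mem_product.1 huv).1 (mem_product.1 huv).2
      simp only [adjFn, hG', SimpleGraph.fromEdgeSet_adj, Set.mem_ofPred_eq, ne_eq, hne,
        not_false_eq_true, and_true]
      rcases hX s(u, v) with h | h <;> simp [h]
    have h1 := hdev (Sum.inl (A, B, true))
    have h2 := hdev (Sum.inl (A, B, false))
    simp only [ha, if_true, Bool.false_eq_true, if_false] at h1 h2
    rw [hsum] at h1 h2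
    rw [abs_le]
    constructor <;> linarith

/-- If the colouring `c` is finer than `c₀` and weakly regular for `G`, then `G` can be changed into
a graph whose edges are distributed evenly between the classes of `c₀`, at a cost given by the `L¹`
distance of the densities on `c` and on `c₀`. -/
lemma flatten {V ι ι₀ : Type} [Fintype V] (G : SimpleGraph V) (c : V → ι)
    (c₀ : V → ι₀) (hc : ∀ u v, c u = c v → c₀ u = c₀ v) (ε η : ℝ)
    (hreg : ∀ A B : Finset V, |∑ x ∈ A ×ˢ B, scale (bd G c x) (bd G c₀ x) *
      (adjFn G x - bd G c x)| ≤ ε * (Fintype.card V : ℝ) ^ 2)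
    (hη0 : 0 < η) (hη1 : η ≤ 1) (hn : 16 / η ^ 2 ≤ Fintype.card V) :
    ∃ G' : SimpleGraph V,
      ((symmDiff G.edgeSet G'.edgeSet).ncard : ℝ)
        ≤ ∑ x, |bd G c x - bd G c₀ x| + η * (Fintype.card V : ℝ) ^ 2 ∧
      ∀ (A B : Finset V) (d : ℝ), (∀ u ∈ A, ∀ v ∈ B, c₀ u ≠ c₀ v) →
        (∀ u ∈ A, ∀ v ∈ B, bd G c₀ (u, v) = d) →
        |(eCnt G' A B : ℝ) - d * (#A * #B)| ≤ (ε + η) * (Fintype.card V : ℝ) ^ 2 := by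
  set w : V → V → ℝ := fun u v => if c₀ u = c₀ v then adjFn G (u, v) else
    newWt (adjFn G (u, v)) (bd G c (u, v)) (bd G c₀ (u, v)) with hw
  have hmem : ∀ x : V × V, 0 ≤ newWt (adjFn G x) (bd G c x) (bd G c₀ x) ∧
      newWt (adjFn G x) (bd G c x) (bd G c₀ x) ≤ 1 := fun x =>
    newWt_mem (adjFn_nonneg G x) (adjFn_le_one G x) (bd_nonneg G c x) (bd_le_one G c x)
      (bd_nonneg G c₀ x) (bd_le_one G c₀ x)
  obtain ⟨G', hG1, hG2⟩ := exists_rounded_graph G w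
    (fun u v => by
      simp only [hw, adjFn_swap G u v, bd_swap G c u v, bd_swap G c₀ u v, eq_comm])
    (fun u v => by
      simp only [hw]; split_ifs
      · exact adjFn_nonneg G _
      · exact (hmem _).1)
    (fun u v => by
      simp only [hw]; split_ifs
      · exact adjFn_le_one G _
      · exact (hmem _).2) η hη0 hη1 hn
  refine ⟨G', hG1.trans ?_, ?_⟩
  · gcongr ?_ + _
    refine le_trans (sum_le_sum fun x _ => ?_) (sum_abs_newWt_sub G c c₀ hc)
    simp only [hw]
    split_ifs
    · simp
    · exact le_rfl
  · intro A B d hne hd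
    have hdisj : Disjoint A B := disjoint_left.2 fun u hu hv => hne u hu u hv rfl
    have h1 := hG2 A B hdisj
    have h2 : ∑ x ∈ A ×ˢ B, w x.1 x.2 = d * (#A * #B)
        + ∑ x ∈ A ×ˢ B, scale (bd G c x) (bd G c₀ x) * (adjFn G x - bd G c x) := by
      have h3 : d * ((#A : ℝ) * #B) = ∑ x ∈ A ×ˢ B, d := by
        rw [sum_const, card_product, nsmul_eq_mul]; push_cast; ring
      rw [h3, ← sum_add_distrib]
      refine sum_congr rfl ?_
      rintro ⟨u, v⟩ huv
      obtain ⟨hu, hv⟩ := mem_product.1 huv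
      simp only [hw, if_neg (hne u hu v hv), newWt, hd u hu v hv]
    rw [h2] at h1
    have h4 := abs_le.1 (hreg A B)
    have h5 := abs_le.1 h1
    rw [abs_le]
    constructor <;> nlinarith

/-! ### The increment step -/

/-- A Finpartition as a colouring of the vertices by its parts. -/
noncomputable def partCol {V : Type} [Fintype V] (P : Finpartition (univ : Finset V)) (v : V) :
    P.parts := ⟨P.part v, by simp⟩

lemma partCol_eq_iff {V : Type} [Fintype V] (P : Finpartition (univ : Finset V)) (u v : V) :
    partCol P u = partCol P v ↔ P.part u = P.part v := by
  simp [partCol]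

lemma part_eq_of_le {V : Type} [Fintype V] {P Q : Finpartition (univ : Finset V)} (h : Q ≤ P)
    {u v : V} (huv : Q.part u = Q.part v) : P.part u = P.part v := by
  obtain ⟨A, hA, hsub⟩ := h (Q.part_mem.2 (mem_univ v))
  have hv : v ∈ A := hsub (by simp)
  have hu : u ∈ A := hsub (by rw [← huv]; simp)
  rw [P.part_eq_of_mem hA hu, P.part_eq_of_mem hA hv]

/-- If the colouring `cQ` refines `c` outside a small set of vertices, then its densities are
nearly as far from those of `c₀` as the densities of `c` are: test against the sign of
`bd G c - bd G c₀`, set to zero on cells meeting the exceptional set. -/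
lemma l1_transfer {V ι ι₀ κ : Type} [Fintype V] (G : SimpleGraph V) (c : V → ι) (c₀ : V → ι₀)
    (cQ : V → κ) (hc : ∀ u v, c u = c v → c₀ u = c₀ v) :
    ∑ x, |bd G c x - bd G c₀ x|
        - 2 * (#{v : V | ¬ ∀ u, cQ u = cQ v → c u = c v} : ℝ) * Fintype.card V
      ≤ ∑ x, |bd G cQ x - bd G c₀ x| := by
  set U := univ.filter fun v : V => ¬ ∀ u, cQ u = cQ v → c u = c v with hU
  have hUm : ∀ u v, cQ u = cQ v → (u ∈ U ↔ v ∈ U) := by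
    intro u v huv
    simp only [hU, mem_filter, mem_univ, true_and, not_iff_not]
    constructor
    · intro h z hz
      rw [h z (hz.trans huv.symm), h v huv.symm]
    · intro h z hz
      rw [h z (hz.trans huv), h u huv]
  have hUc : ∀ u v, cQ u = cQ v → v ∉ U → c u = c v := by
    intro u v huv hv
    simp only [hU, mem_filter, mem_univ, true_and, not_not] at hv
    exact hv u huv
  set σ : V × V → ℝ := fun x => if bd G c₀ x ≤ bd G c x then 1 else -1 with hσ
  set τ : V × V → ℝ := fun x => if x.1 ∈ U ∨ x.2 ∈ U then 0 else σ x with hτ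
  have hσm : ∀ x y : V × V, c x.1 = c y.1 → c x.2 = c y.2 → σ x = σ y := by
    intro x y h1 h2
    simp only [hσ, bd_congr G c h1 h2, bd_congr G c₀ (hc _ _ h1) (hc _ _ h2)]
  have hτm : ∀ x y : V × V, Prod.map cQ cQ x = Prod.map cQ cQ y → τ x = τ y := by
    intro x y h
    have h1 : cQ x.1 = cQ y.1 := congrArg Prod.fst h
    have h2 : cQ x.2 = cQ y.2 := congrArg Prod.snd h
    simp only [hτ, hUm _ _ h1, hUm _ _ h2]
    split_ifs with h3
    · rfl
    · push Not at h3
      exact hσm x y (hUc _ _ h1 h3.1) (hUc _ _ h2 h3.2)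
  have e1 : ∑ x, |bd G c x - bd G c₀ x| = ∑ x, (adjFn G x - bd G c₀ x) * σ x := by
    have h1 : ∑ x, bd G c x * σ x = ∑ x, adjFn G x * σ x := sum_avg_mul _ _ σ
      (fun x y h => hσm x y (congrArg Prod.fst h) (congrArg Prod.snd h))
    simp only [sub_mul, sum_sub_distrib, ← h1]
    rw [← sum_sub_distrib]
    refine sum_congr rfl fun x _ => ?_
    simp only [hσ]
    split_ifs with h
    · rw [abs_of_nonneg (by linarith)]; ring
    · rw [abs_of_neg (by linarith)]; ring
  have e2 : ∑ x, (adjFn G x - bd G c₀ x) * τ x ≤ ∑ x, |bd G cQ x - bd G c₀ x| := by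
    have h1 : ∑ x, bd G cQ x * τ x = ∑ x, adjFn G x * τ x := sum_avg_mul _ _ τ hτm
    simp only [sub_mul, sum_sub_distrib, ← h1]
    rw [← sum_sub_distrib]
    refine sum_le_sum fun x _ => ?_
    rw [← sub_mul]
    simp only [hτ, hσ]
    split_ifs
    · simp
    · simpa using le_abs_self (bd G cQ x - bd G c₀ x)
    · simpa using neg_le_abs (bd G cQ x - bd G c₀ x)
  have e3 : ∑ x, (adjFn G x - bd G c₀ x) * σ x - ∑ x, (adjFn G x - bd G c₀ x) * τ x
      ≤ ∑ x : V × V, ((if x.1 ∈ U then 1 else 0) + (if x.2 ∈ U then 1 else 0) : ℝ) := by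
    rw [← sum_sub_distrib]
    refine sum_le_sum fun x _ => ?_
    have a0 := adjFn_nonneg G x
    have a1 := adjFn_le_one G x
    have b0 := bd_nonneg G c₀ x
    have b1 := bd_le_one G c₀ x
    simp only [hτ, hσ]
    by_cases h1 : x.1 ∈ U <;> by_cases h2 : x.2 ∈ U <;> simp only [h1, h2, or_true,
      or_false, if_true, if_false] <;> split_ifs <;> linarith
  have e4 : ∑ x : V × V, ((if x.1 ∈ U then 1 else 0) + (if x.2 ∈ U then 1 else 0) : ℝ)
      = 2 * (#U : ℝ) * Fintype.card V := by
    have h1 : ∑ u : V, (if u ∈ U then 1 else 0 : ℝ) = #U := by simp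
    have h2 : ∑ x : V × V, (if x.1 ∈ U then 1 else 0 : ℝ) = Fintype.card V * #U := by
      rw [Fintype.sum_prod_type_right]
      simp only [h1, sum_const, nsmul_eq_mul, card_univ]
    have h3 : ∑ x : V × V, (if x.2 ∈ U then 1 else 0 : ℝ) = Fintype.card V * #U := by
      rw [Fintype.sum_prod_type]
      simp only [h1, sum_const, nsmul_eq_mul, card_univ]
    rw [sum_add_distrib, h2, h3]
    ring
  linarith

/-- An even distribution of edges, up to an error of `e * n ^ 2`, gives regularity. -/
lemma regPair_of_even {V : Type} [Fintype V] (G : SimpleGraph V) (A B : Finset V)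
    (d f k n e : ℝ) (hf : 0 < f) (hk : 0 < k) (hn : 0 < n)
    (hA : n ≤ 2 * k * #A) (hB : n ≤ 2 * k * #B) (he : 8 * e * k ^ 2 ≤ f ^ 3)
    (h : ∀ A' ⊆ A, ∀ B' ⊆ B, |(eCnt G A' B' : ℝ) - d * (#A' * #B')| ≤ e * n ^ 2) (hf1 : f ≤ 1) :
    RegPair G f A B := by
  have key : ∀ A' ⊆ A, ∀ B' ⊆ B, f * #A ≤ #A' → f * #B ≤ #B' → |dens G A' B' - d| ≤ f / 2 := by
    intro A' hA' B' hB' h1 h2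
    have hA0 : (0 : ℝ) < #A := by
      by_contra hcon
      nlinarith [(Nat.cast_nonneg #A : (0 : ℝ) ≤ #A)]
    have hB0 : (0 : ℝ) < #B := by
      by_contra hcon
      nlinarith [(Nat.cast_nonneg #B : (0 : ℝ) ≤ #B)]
    have ha : 0 < f * n / (2 * k) := by positivity
    have h3 : f * n / (2 * k) ≤ #A' := by
      rw [div_le_iff₀ (by positivity)]
      nlinarith
    have h4 : f * n / (2 * k) ≤ #B' := by
      rw [div_le_iff₀ (by positivity)]
      nlinarith
    have h5 : (f * n / (2 * k)) * (f * n / (2 * k)) ≤ (#A' : ℝ) * #B' := by gcongr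
    have h6 : (0 : ℝ) < (#A' : ℝ) * #B' := lt_of_lt_of_le (by positivity) h5
    have h7 : dens G A' B' - d = ((eCnt G A' B' : ℝ) - d * (#A' * #B')) / (#A' * #B') := by
      rw [_root_.dens, sub_div, mul_div_assoc, div_self h6.ne', mul_one]
    rw [h7, abs_div, abs_of_pos h6, div_le_iff₀ h6]
    refine (h A' hA' B' hB').trans (le_trans ?_ (mul_le_mul_of_nonneg_left h5 (by positivity)))
    have h8 : f / 2 * (f * n / (2 * k) * (f * n / (2 * k))) = f ^ 3 / (8 * k ^ 2) * n ^ 2 := by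
      field_simp; ring
    rw [h8]
    gcongr
    rw [le_div_iff₀ (by positivity)]
    linarith
  intro A' hA' B' hB' h1 h2
  have k1 := abs_le.1 (key A Subset.rfl B Subset.rfl
    (mul_le_of_le_one_left (by positivity) hf1) (mul_le_of_le_one_left (by positivity) hf1))
  have k2 := abs_le.1 (key A' hA' B' hB' h1 h2)
  rw [abs_le]
  constructor <;> linarith

lemma pow_le_two_rpow {y : ℝ} (hy : 256 ≤ y) : y ^ 8 ≤ (2 : ℝ) ^ y := by
  have h1 : 1 + y / 16 * 1 ≤ (1 + 1 : ℝ) ^ (y / 16) :=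
    one_add_mul_self_le_rpow_one_add (by norm_num) (by linarith)
  have h2 : (2 : ℝ) ^ y = ((2 : ℝ) ^ (y / 16)) ^ 16 := by
    rw [← Real.rpow_natCast, ← Real.rpow_mul (by norm_num)]
    congr 1; push_cast; ring
  have h3 : y / 16 ≤ (2 : ℝ) ^ (y / 16) := by norm_num at h1 ⊢; linarith
  rw [h2]
  calc y ^ 8 ≤ y ^ 8 * (y / 256) ^ 8 := by
        refine le_mul_of_one_le_right (by positivity) (one_le_pow₀ ?_)
        linarith
    _ = (y / 16) ^ 16 := by ring
    _ ≤ _ := by gcongr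

/-- An `L¹` distance between the densities of nested partitions forces an entropy gain. -/
lemma ent_gain {V : Type} [Fintype V] (G : SimpleGraph V) (δ p : ℝ) (hδ : 0 < δ)
    (hp : 0 < p) (hS : ∑ x, adjFn G x = p * (Fintype.card V : ℝ) ^ 2)
    (hn0 : (0 : ℝ) < Fintype.card V) {P Q : Finpartition (univ : Finset V)} (hQP : Q ≤ P)
    (hdist : δ / 8 * (p * (Fintype.card V : ℝ) ^ 2)
      ≤ ∑ x, |bd G (partCol Q) x - bd G (partCol P) x|) :
    ent (Prod.map (partCol P) (partCol P)) (adjFn G)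
        + δ ^ 2 * (p * (Fintype.card V : ℝ) ^ 2) / 256
      ≤ ent (Prod.map (partCol Q) (partCol Q)) (adjFn G) := by
  have href : ∀ x y, Prod.map (partCol Q) (partCol Q) x = Prod.map (partCol Q) (partCol Q) y →
      Prod.map (partCol P) (partCol P) x = Prod.map (partCol P) (partCol P) y := by
    intro x y h
    have h1 : partCol Q x.1 = partCol Q y.1 := congrArg Prod.fst h
    have h2 : partCol Q x.2 = partCol Q y.2 := congrArg Prod.snd h
    rw [partCol_eq_iff] at h1 h2
    refine Prod.ext ?_ ?_
    · exact (partCol_eq_iff _ _ _).2 (part_eq_of_le hQP h1)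
    · exact (partCol_eq_iff _ _ _).2 (part_eq_of_le hQP h2)
  have hent := ent_increment (Prod.map (partCol P) (partCol P))
    (Prod.map (partCol Q) (partCol Q)) (adjFn G) (adjFn_nonneg G) href
  rw [hS] at hent
  set s := p * (Fintype.card V : ℝ) ^ 2 with hs
  have hs0 : 0 < s := by positivity
  have h3 := (pow_le_pow_left₀ (by positivity) hdist 2).trans hent
  set a := ent (Prod.map (partCol Q) (partCol Q)) (adjFn G)
  set b := ent (Prod.map (partCol P) (partCol P)) (adjFn G)
  have h4 : s * (δ ^ 2 * s / 256) ≤ s * (a - b) := by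
    have : (δ / 8 * s) ^ 2 = 4 * (s * (δ ^ 2 * s / 256)) := by ring
    linarith
  have h5 := le_of_mul_le_mul_left h4 hs0
  linarith

set_option maxHeartbeats 600000 in
/-- Either `G` is close to a graph for which `P` is regular, or `P` has an equipartition refining
it of bounded order and substantially larger entropy. -/
lemma increment_step {V : Type} [Fintype V] (G : SimpleGraph V) (δ p : ℝ) (hδ : 0 < δ)
    (hp : 0 < p) (hS : ∑ x, adjFn G x = p * (Fintype.card V : ℝ) ^ 2)
    (P : Finpartition (univ : Finset V)) (hP : P.IsEquipartition) (f y : ℝ) (hf0 : 0 < f)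
    (hf1 : f < 1) (hy : y = P.parts.card / f) (hk : 256 ≤ P.parts.card)
    (hkδ : 128 ≤ P.parts.card * (δ * p)) (hn : (2 : ℝ) ^ ((2 : ℝ) ^ y) ≤ Fintype.card V) :
    (∃ G' : SimpleGraph V, ((symmDiff G.edgeSet G'.edgeSet).ncard : ℝ)
        ≤ δ * (p * (Fintype.card V : ℝ) ^ 2 / 2) ∧
      ∀ A ∈ P.parts, ∀ B ∈ P.parts, A ≠ B → RegPair G' f A B) ∨
    (∃ Q : Finpartition (univ : Finset V), Q.IsEquipartition ∧ Q ≤ P ∧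
      P.parts.card ≤ Q.parts.card ∧ (Q.parts.card : ℝ) ≤ (2 : ℝ) ^ ((2 : ℝ) ^ y) ∧
      ent (Prod.map (partCol P) (partCol P)) (adjFn G)
          + δ ^ 2 * (p * (Fintype.card V : ℝ) ^ 2) / 256
        ≤ ent (Prod.map (partCol Q) (partCol Q)) (adjFn G)) := by
  set k := P.parts.card with hkdef
  set n := Fintype.card V with hndef
  have hkR : (256 : ℝ) ≤ k := by exact_mod_cast hk
  have hky : (k : ℝ) ≤ y := by
    rw [hy, le_div_iff₀ hf0]; nlinarith
  have hyf : y * f = k := by rw [hy]; field_simp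
  have hy256 : 256 ≤ y := hkR.trans hky
  have hy0 : 0 < y := by linarith
  have hy8 := pow_le_two_rpow hy256
  have hy6 : 65536 * y ^ 6 ≤ y ^ 8 := by
    have : (65536 : ℝ) ≤ y ^ 2 := by nlinarith
    calc 65536 * y ^ 6 ≤ y ^ 2 * y ^ 6 := by gcongr
      _ = _ := by ring
  have hy61 : y ≤ y ^ 6 := le_self_pow₀ (by linarith) (by norm_num)
  have hn8 : y ^ 8 ≤ n := by
    refine (hy8.trans ?_).trans hn
    exact Real.rpow_le_rpow_of_exponent_le (by norm_num) (by nlinarith)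
  have hn0 : (0 : ℝ) < n := lt_of_lt_of_le (by positivity) hn8
  set ε : ℝ := 1 / (16 * y ^ 3) with hε
  have hε0 : 0 < ε := by positivity
  have hεsq : ε ^ 2 = 1 / (256 * y ^ 6) := by rw [hε]; field_simp; norm_num
  have hε1 : ε ≤ 1 := by
    rw [hε, div_le_one (by positivity)]
    nlinarith [one_le_pow₀ (n := 3) (by linarith : (1 : ℝ) ≤ y)]
  set T : ℕ := ⌊256 * y ^ 6⌋₊ + 1 with hT
  have hT1 : 1 < T * ε ^ 2 := by
    rw [hεsq, mul_one_div, one_lt_div (by positivity), hT]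
    push_cast
    exact Nat.lt_floor_add_one _
  have hT2 : (T : ℝ) ≤ 256 * y ^ 6 + 1 := by
    rw [hT]; push_cast
    linarith [Nat.floor_le (show 0 ≤ 256 * y ^ 6 by positivity)]
  obtain ⟨ι, _, c, hcard, hc, hreg⟩ := weak_reg (partCol P) (adjFn G) (adjFn_nonneg G)
    (adjFn_le_one G) scale (fun q p hq0 hq1 hp0 hp1 => by
      rw [abs_of_nonneg (scale_nonneg hq0 hq1 hp0 hp1)]
      exact scale_le_one hq0 hp1) ε hε0 T hT1
  rw [Fintype.card_coe, ← hkdef] at hcard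
  have hinv : 1 ≤ y * (δ * p) / 128 := by
    have : (k : ℝ) * (δ * p) ≤ y * (δ * p) := by gcongr
    linarith
  by_cases hcase : ∑ x, |bd G c x - bd G (partCol P) x| ≤ δ / 4 * (p * (n : ℝ) ^ 2)
  · left
    obtain ⟨G', h1, h2⟩ := flatten G c (partCol P) hc ε ε hreg hε0 hε1 (by
      rw [hεsq]
      refine le_trans (le_of_eq ?_) ((show 4096 * y ^ 6 ≤ y ^ 8 by nlinarith).trans hn8)
      field_simp; norm_num)
    refine ⟨G', h1.trans ?_, ?_⟩
    · have h3 : ε ≤ δ * p / 128 := by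
        rw [hε, div_le_iff₀ (by positivity)]
        have : y ≤ 16 * y ^ 3 := by
          have := le_self_pow₀ (by linarith : (1 : ℝ) ≤ y) (show 3 ≠ 0 by norm_num)
          nlinarith [pow_pos hy0 3]
        calc (1 : ℝ) ≤ y * (δ * p) / 128 := hinv
          _ = δ * p / 128 * y := by ring
          _ ≤ _ := by gcongr
      have h4 : ε * (n : ℝ) ^ 2 ≤ δ * p / 128 * (n : ℝ) ^ 2 := by gcongr
      have h5 : 0 < δ * p * (n : ℝ) ^ 2 := by positivity
      linarith
    · intro A hA B hB hAB
      have hpos : 0 < k := by omega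
      have hsize : ∀ A ∈ P.parts, (n : ℝ) ≤ 2 * k * #A := by
        intro A hA
        have h3 := hP.average_le_card_part hA
        rw [card_univ, ← hkdef, ← hndef] at h3
        have hkn : k ≤ n := by
          rw [hkdef, hndef, ← card_univ]; exact P.card_parts_le_card
        have h4 : 1 ≤ n / k := Nat.div_pos hkn hpos
        have h5 := Nat.div_add_mod n k
        have h6 := Nat.mod_lt n hpos
        have h7 : k * 1 ≤ k * (n / k) := Nat.mul_le_mul_left k h4
        have h8 : k * (n / k) ≤ k * #A := Nat.mul_le_mul_left k h3
        have h9 : n ≤ 2 * (k * #A) := by omega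
        have : (n : ℝ) ≤ 2 * ((k : ℝ) * #A) := by exact_mod_cast h9
        linarith
      obtain ⟨u₀, hu₀⟩ := P.nonempty_of_mem_parts hA
      obtain ⟨v₀, hv₀⟩ := P.nonempty_of_mem_parts hB
      refine regPair_of_even G' A B (bd G (partCol P) (u₀, v₀)) f k n (ε + ε) hf0
        (by linarith) hn0 (hsize A hA) (hsize B hB) ?_ ?_ hf1.le
      · rw [← hyf, hε]
        have h3 : 8 * (1 / (16 * y ^ 3) + 1 / (16 * y ^ 3)) * (y * f) ^ 2 = f ^ 2 / y := by
          field_simp; norm_num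
        rw [h3, div_le_iff₀ hy0]
        have : 1 ≤ f * y := by linarith
        nlinarith [sq_nonneg f]
      · intro A' hA' B' hB'
        refine h2 A' B' _ ?_ ?_
        · intro u hu v hv h
          rw [partCol_eq_iff, P.part_eq_of_mem hA (hA' hu), P.part_eq_of_mem hB (hB' hv)] at h
          exact hAB h
        · intro u hu v hv
          refine bd_congr G _ ?_ ?_ <;> rw [partCol_eq_iff]
          · rw [P.part_eq_of_mem hA (hA' hu), P.part_eq_of_mem hA hu₀]
          · rw [P.part_eq_of_mem hB (hB' hv), P.part_eq_of_mem hB hv₀]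
  · right
    push Not at hcase
    have hord : ((k * (4 ^ T * k) : ℕ) : ℝ) ≤ (2 : ℝ) ^ ((2 : ℝ) ^ y) := by
      have h1 : (k : ℝ) ≤ (2 : ℝ) ^ y := by
        refine le_trans ?_ (Real.rpow_le_rpow_of_exponent_le (by norm_num) hky)
        rw [Real.rpow_natCast]
        exact_mod_cast (Nat.lt_two_pow_self).le
      have h2 : ((4 : ℝ) ^ T) = (2 : ℝ) ^ (2 * (T : ℝ)) := by
        rw [Real.rpow_mul (by norm_num), Real.rpow_natCast]; norm_num
      have h3 : y + (2 * (T : ℝ) + y) ≤ (2 : ℝ) ^ y := by nlinarith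
      push_cast
      calc (k : ℝ) * (4 ^ T * k) ≤ (2 : ℝ) ^ y * ((2 : ℝ) ^ (2 * (T : ℝ)) * (2 : ℝ) ^ y) := by
            rw [h2]; gcongr
        _ = (2 : ℝ) ^ (y + (2 * (T : ℝ) + y)) := by
            rw [Real.rpow_add (by norm_num), Real.rpow_add (by norm_num)]
        _ ≤ _ := Real.rpow_le_rpow_of_exponent_le (by norm_num) h3
    have hr : 0 < 4 ^ T * k := Nat.mul_pos (by positivity) (by omega)
    obtain ⟨Q, hQ, hQP, hQc, hQU⟩ := exists_equi_refinement P hP c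
      (fun u v h => (partCol_eq_iff P u v).1 (hc u v h)) (4 ^ T * k) hr
      (by exact_mod_cast hord.trans hn) (by omega)
    refine ⟨Q, hQ, hQP, ?_, ?_, ?_⟩
    · rw [hQc]; exact Nat.le_mul_of_pos_right _ hr
    · rw [hQc]; exact hord
    · have hl1 := l1_transfer G c (partCol P) (partCol Q) hc
      simp only [partCol_eq_iff] at hl1
      set U := #{v : V | ¬ ∀ u, Q.part u = Q.part v → c u = c v} with hU
      have hUk : U * k ≤ n := by
        have h1 : U * k * (k * 4 ^ T) ≤ n * (k * 4 ^ T) := by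
          calc U * k * (k * 4 ^ T) = U * (k * (4 ^ T * k)) := by ring
            _ ≤ Fintype.card ι * n := hQU
            _ ≤ k * 4 ^ T * n := Nat.mul_le_mul_right _ hcard
            _ = _ := by ring
        exact Nat.le_of_mul_le_mul_right h1 (Nat.mul_pos (by omega) (by positivity))
      have hUkR : (U : ℝ) * k ≤ n := by exact_mod_cast hUk
      have hUδ : 2 * (U : ℝ) * n ≤ δ / 8 * (p * (n : ℝ) ^ 2) := by
        have h1 : 128 * (U : ℝ) ≤ n * (δ * p) := by
          calc 128 * (U : ℝ) ≤ k * (δ * p) * U := by gcongr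
            _ = U * k * (δ * p) := by ring
            _ ≤ n * (δ * p) := by gcongr
        have h2 : 128 * (U : ℝ) * n ≤ n * (δ * p) * n := by gcongr
        have h3 : 0 ≤ (U : ℝ) * n := by positivity
        have h4 : (n : ℝ) * (δ * p) * n = 8 * (δ / 8 * (p * (n : ℝ) ^ 2)) := by ring
        linarith
      have hdist : δ / 8 * (p * (n : ℝ) ^ 2)
          ≤ ∑ x, |bd G (partCol Q) x - bd G (partCol P) x| := by linarith
      exact ent_gain G δ p hδ hp hS hn0 hQP hdist

/-! ### Growth of the iterated function -/

/-- The function `F(x) = 2 ^ (x / f x)`, rounded up. -/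
noncomputable def tower (f : ℕ → ℝ) (x : ℕ) : ℕ := ⌈(2 : ℝ) ^ ((x : ℝ) / f x)⌉₊

lemma le_div_self_fn {f : ℕ → ℝ} (hf : ∀ n, f n ∈ Set.Ioo (0 : ℝ) 1)
    (x : ℕ) : (x : ℝ) ≤ x / f x := by
  rw [le_div_iff₀ (hf x).1]
  exact mul_le_of_le_one_right (Nat.cast_nonneg x) (hf x).2.le

lemma two_rpow_le_tower {f : ℕ → ℝ} (hf : ∀ n, f n ∈ Set.Ioo (0 : ℝ) 1)
    (x : ℕ) : (2 : ℝ) ^ (x : ℝ) ≤ tower f x :=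
  (Real.rpow_le_rpow_of_exponent_le (by norm_num) (le_div_self_fn hf x)).trans (Nat.le_ceil _)

lemma two_mul_le_tower {f : ℕ → ℝ} (hf : ∀ n, f n ∈ Set.Ioo (0 : ℝ) 1)
    (x : ℕ) : 2 * x ≤ tower f x := by
  have h1 : 2 ^ x ≤ tower f x := by
    have := two_rpow_le_tower hf x
    rw [Real.rpow_natCast] at this
    exact_mod_cast this
  refine le_trans ?_ h1
  rcases x with _ | x
  · simp
  · have : x < 2 ^ x := Nat.lt_two_pow_self
    rw [pow_succ]; omega

lemma tower_mono {f : ℕ → ℝ} (hf : ∀ n, f n ∈ Set.Ioo (0 : ℝ) 1)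
    (hanti : Antitone f) : Monotone (tower f) := by
  intro x y hxy
  refine Nat.ceil_mono (Real.rpow_le_rpow_of_exponent_le (by norm_num) ?_)
  exact div_le_div₀ (Nat.cast_nonneg y) (by exact_mod_cast hxy) (hf y).1 (hanti hxy)

lemma tower_iter_mono {f : ℕ → ℝ} (hf : ∀ n, f n ∈ Set.Ioo (0 : ℝ) 1)
    (hanti : Antitone f) (s : ℕ) : Monotone fun j => (tower f)^[j] s :=
  (tower_mono hf hanti).monotone_iterate_of_le_map ((by omega : s ≤ 2 * s).trans
    (two_mul_le_tower hf s))

lemma two_pow_mul_le_iter {f : ℕ → ℝ} (hf : ∀ n, f n ∈ Set.Ioo (0 : ℝ) 1)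
    (s j : ℕ) : s * 2 ^ j ≤ (tower f)^[j] s := by
  induction j with
  | zero => simp
  | succ j ih =>
    rw [Function.iterate_succ_apply']
    refine le_trans ?_ (two_mul_le_tower hf _)
    rw [pow_succ, ← mul_assoc]; omega

lemma two_rpow_two_rpow_le {f : ℕ → ℝ} (hf : ∀ n, f n ∈ Set.Ioo (0 : ℝ) 1)
    (k : ℕ) :
    (2 : ℝ) ^ ((2 : ℝ) ^ ((k : ℝ) / f k)) ≤ tower f (tower f k) :=
  (Real.rpow_le_rpow_of_exponent_le (by norm_num) (Nat.le_ceil _)).trans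
    (two_rpow_le_tower hf (tower f k))

/-! ### Edge counts and trivially regular pairs -/

lemma sum_adjFn {V : Type} [Fintype V] (G : SimpleGraph V) :
    ∑ x, adjFn G x = 2 * (G.edgeSet.ncard : ℝ) := by
  have h1 : G.edgeSet.ncard = #G.edgeFinset := by
    rw [← SimpleGraph.coe_edgeFinset, Set.ncard_coe_finset]
  have h2 : ∑ x, adjFn G x = ((∑ v, G.degree v : ℕ) : ℝ) := by
    rw [Fintype.sum_prod_type]
    push_cast
    refine sum_congr rfl fun v _ => ?_
    simp only [adjFn, sum_boole, ← SimpleGraph.card_neighborFinset_eq_degree,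
      SimpleGraph.neighborFinset_eq_filter]
  rw [h2, G.sum_degrees_eq_twice_card_edges, h1]
  push_cast
  rfl

lemma regPair_bot {V : Type} [Fintype V] (ε : ℝ) (hε : 0 < ε) (A B : Finset V) :
    RegPair (⊥ : SimpleGraph V) ε A B := by
  intro A' _ B' _ _ _
  simp [_root_.dens, eCnt, hε.le]

lemma regPair_top {V : Type} [Fintype V] (ε : ℝ) (hε : 0 < ε) (A B : Finset V)
    (hAB : Disjoint A B) (hA : A.Nonempty) (hB : B.Nonempty) :
    RegPair (⊤ : SimpleGraph V) ε A B := by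
  have key : ∀ A' ⊆ A, ∀ B' ⊆ B, (0 : ℝ) < #A' → (0 : ℝ) < #B' →
      _root_.dens (⊤ : SimpleGraph V) A' B' = 1 := by
    intro A' hA' B' hB' h1 h2
    have h3 : eCnt (⊤ : SimpleGraph V) A' B' = #A' * #B' := by
      rw [eCnt, ← card_product]
      congr 1
      ext x
      simp only [mem_filter, and_iff_left_iff_imp]
      intro hx
      rw [mem_product] at hx
      exact disjoint_iff_ne.1 hAB _ (hA' hx.1) _ (hB' hx.2)
    rw [_root_.dens, h3]
    push_cast
    exact div_self (mul_pos h1 h2).ne'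
  have hA0 : (0 : ℝ) < #A := by exact_mod_cast hA.card_pos
  have hB0 : (0 : ℝ) < #B := by exact_mod_cast hB.card_pos
  intro A' hA' B' hB' h1 h2
  rw [key A Subset.rfl B Subset.rfl hA0 hB0,
    key A' hA' B' hB' ((mul_pos hε hA0).trans_le h1) ((mul_pos hε hB0).trans_le h2)]
  simpa using hε.le

lemma regPair_singleton {V : Type} [Fintype V] (G : SimpleGraph V) (ε : ℝ) (hε : 0 < ε)
    (a b : V) : RegPair G ε {a} {b} := by
  intro A' hA' B' hB' h1 h2
  have hA : A' = {a} := by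
    rcases subset_singleton_iff.1 hA' with h | h
    · subst h; simp at h1; linarith
    · exact h
  have hB : B' = {b} := by
    rcases subset_singleton_iff.1 hB' with h | h
    · subst h; simp at h2; linarith
    · exact h
  rw [hA, hB]
  simpa using hε.le

lemma ncard_symmDiff_top {V : Type} [Fintype V] (G : SimpleGraph V) :
    ((symmDiff G.edgeSet (⊤ : SimpleGraph V).edgeSet).ncard : ℝ)
      ≤ (Fintype.card V : ℝ) ^ 2 / 2 - G.edgeSet.ncard := by
  have hsub : G.edgeSet ⊆ (⊤ : SimpleGraph V).edgeSet := SimpleGraph.edgeSet_mono le_top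
  rw [symmDiff_of_le hsub, Set.ncard_sdiff hsub, Nat.cast_sub (Set.ncard_le_ncard hsub)]
  have h1 : ∑ x, adjFn (⊤ : SimpleGraph V) x ≤ ∑ _x : V × V, (1 : ℝ) :=
    sum_le_sum fun x _ => adjFn_le_one _ x
  rw [sum_adjFn] at h1
  simp only [sum_const, card_univ, Fintype.card_prod, nsmul_eq_mul, mul_one] at h1
  push_cast at h1
  nlinarith

/-! ### Iterating the increment step -/

/-- Starting from a partition of sufficiently large order, each step either finishes or raises the
entropy by a fixed amount while applying `tower f` at most twice more to the bound on the order. -/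
lemma iterate_step {V : Type} [Fintype V] (G : SimpleGraph V) (δ p : ℝ) (hδ : 0 < δ)
    (hp : 0 < p) (hS : ∑ x, adjFn G x = p * (Fintype.card V : ℝ) ^ 2)
    {f : ℕ → ℝ} (hf : ∀ n, f n ∈ Set.Ioo (0 : ℝ) 1) (hanti : Antitone f) (s j H : ℕ)
    (hH : (tower f)^[H] s ≤ Fintype.card V)
    (P₁ : Finpartition (univ : Finset V)) (hP₁ : P₁.IsEquipartition)
    (hk : 256 ≤ P₁.parts.card) (hkδ : 128 ≤ P₁.parts.card * (δ * p))
    (hcard : P₁.parts.card ≤ (tower f)^[j] s) (t : ℕ) (ht : j + 2 * t ≤ H) :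
    (∃ G' : SimpleGraph V, ((symmDiff G.edgeSet G'.edgeSet).ncard : ℝ)
        ≤ δ * (p * (Fintype.card V : ℝ) ^ 2 / 2) ∧
      ∃ Z : Finpartition (univ : Finset V), Z.IsEquipartition ∧ Z ≤ P₁ ∧
        (∀ A ∈ Z.parts, ∀ B ∈ Z.parts, A ≠ B → RegPair G' (f Z.parts.card) A B) ∧
        Z.parts.card ≤ (tower f)^[H] s) ∨
    (∃ P : Finpartition (univ : Finset V), P.IsEquipartition ∧ P ≤ P₁ ∧
      P₁.parts.card ≤ P.parts.card ∧ P.parts.card ≤ (tower f)^[j + 2 * t] s ∧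
      ent (Prod.map (partCol P₁) (partCol P₁)) (adjFn G)
          + t * (δ ^ 2 * (p * (Fintype.card V : ℝ) ^ 2) / 256)
        ≤ ent (Prod.map (partCol P) (partCol P)) (adjFn G)) := by
  induction t with
  | zero => exact Or.inr ⟨P₁, hP₁, le_rfl, le_rfl, hcard, by simp⟩
  | succ t ih =>
    rcases ih (by omega) with h | ⟨P, hP, hPP, hPc, hPu, hPe⟩
    · exact Or.inl h
    have hub : tower f (tower f P.parts.card) ≤ (tower f)^[j + 2 * (t + 1)] s := by
      rw [show j + 2 * (t + 1) = (j + 2 * t) + 1 + 1 by ring, Function.iterate_succ_apply',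
        Function.iterate_succ_apply']
      exact tower_mono hf hanti (tower_mono hf hanti hPu)
    have hubn : tower f (tower f P.parts.card) ≤ Fintype.card V :=
      (hub.trans (tower_iter_mono hf hanti s ht)).trans hH
    have hPcR : (P₁.parts.card : ℝ) ≤ P.parts.card := by exact_mod_cast hPc
    have hle := two_rpow_two_rpow_le hf P.parts.card
    rcases increment_step G δ p hδ hp hS P hP (f P.parts.card) _ (hf _).1 (hf _).2 rfl
      (hk.trans hPc) (hkδ.trans (mul_le_mul_of_nonneg_right hPcR (by positivity)))
      (hle.trans (by exact_mod_cast hubn)) with ⟨G', h1, h2⟩ | ⟨Q, hQ, hQP, hQc, hQu, hQe⟩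
    · exact Or.inl ⟨G', h1, P, hP, hPP, h2,
        hPu.trans (tower_iter_mono hf hanti s (by omega : j + 2 * t ≤ H))⟩
    · refine Or.inr ⟨Q, hQ, hQP.trans hPP, hPc.trans hQc, ?_, ?_⟩
      · have h1 := hQu.trans hle
        exact le_trans (by exact_mod_cast h1) hub
      · push_cast
        linarith

/-- The case of a large vertex set, where `L` stands for `log (1 / p) / δ ^ 2`. -/
lemma large_case {V : Type} [Fintype V] (G : SimpleGraph V) (δ p L : ℝ) (hδ : 0 < δ)
    (hp : 0 < p) (hS : ∑ x, adjFn G x = p * (Fintype.card V : ℝ) ^ 2)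
    {f : ℕ → ℝ} (hf : ∀ n, f n ∈ Set.Ioo (0 : ℝ) 1) (hanti : Antitone f) (s H : ℕ) (hs : 0 < s)
    (hH : (tower f)^[H] s ≤ Fintype.card V) (hL : L * δ ^ 2 = Real.log (1 / p))
    (hL1 : 1 / 2 ≤ L) (hL2 : Real.log (1 / p) ≤ L) (hL3 : 1 / δ ≤ 2 * L) (hHL : 600 * L ≤ H)
    (P₀ : Finpartition (univ : Finset V)) (hP₀ : P₀.IsEquipartition) (hcard : P₀.parts.card = s) :
    ∃ G' : SimpleGraph V, ((symmDiff G.edgeSet G'.edgeSet).ncard : ℝ)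
        ≤ δ * (p * (Fintype.card V : ℝ) ^ 2 / 2) ∧
      ∃ Z : Finpartition (univ : Finset V), Z.IsEquipartition ∧ Z ≤ P₀ ∧
        (∀ A ∈ Z.parts, ∀ B ∈ Z.parts, A ≠ B → RegPair G' (f Z.parts.card) A B) ∧
        Z.parts.card ≤ (tower f)^[H] s := by
  set j := ⌈20 * L⌉₊ with hj
  set a := ⌊256 * L⌋₊ + 1 with ha
  have hj1 : 20 * L ≤ j := Nat.le_ceil _
  have hj2 : (j : ℝ) < 20 * L + 1 := Nat.ceil_lt_add_one (by linarith)
  have ha1 : 256 * L < a := by rw [ha]; push_cast; exact Nat.lt_floor_add_one _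
  have ha2 : (a : ℝ) ≤ 256 * L + 1 := by
    rw [ha]; push_cast
    linarith [Nat.floor_le (show 0 ≤ 256 * L by linarith)]
  have hjaH : j + 2 * a ≤ H := by
    have : (j : ℝ) + 2 * a ≤ H := by linarith
    exact_mod_cast this
  have hjn : s * 2 ^ j ≤ Fintype.card V :=
    ((two_pow_mul_le_iter hf s j).trans (tower_iter_mono hf hanti s (by omega : j ≤ H))).trans hH
  -- The initial order `s * 2 ^ j` dominates both `256` and `128 / (δ * p)`.
  have hj10 : 10 ≤ j := by
    have : (10 : ℝ) ≤ j := by linarith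
    exact_mod_cast this
  have h256 : 256 ≤ s * 2 ^ j := by
    calc 256 ≤ 2 ^ 10 := by norm_num
      _ ≤ 2 ^ j := Nat.pow_le_pow_right (by norm_num) hj10
      _ ≤ s * 2 ^ j := Nat.le_mul_of_pos_left _ hs
  have h128 : 128 ≤ ((s * 2 ^ j : ℕ) : ℝ) * (δ * p) := by
    have h1 : 1 / δ ≤ (2 : ℝ) ^ (2 * L) := by
      have : 1 + 2 * L * 1 ≤ (1 + 1 : ℝ) ^ (2 * L) :=
        one_add_mul_self_le_rpow_one_add (by norm_num) (by linarith)
      norm_num at this ⊢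
      rw [one_div] at hL3
      linarith
    have h2 : 1 / p ≤ (2 : ℝ) ^ (2 * L) := by
      rw [← Real.exp_log (show 0 < 1 / p by positivity), Real.rpow_def_of_pos (by norm_num)]
      refine Real.exp_le_exp.2 (hL2.trans ?_)
      nlinarith [Real.log_two_gt_d9]
    have h3 : (128 : ℝ) ≤ (2 : ℝ) ^ (14 * L) := by
      calc (128 : ℝ) = (2 : ℝ) ^ (7 : ℝ) := by norm_num
        _ ≤ _ := Real.rpow_le_rpow_of_exponent_le (by norm_num) (by linarith)
    have h4 : (2 : ℝ) ^ (14 * L) * ((2 : ℝ) ^ (2 * L) * (2 : ℝ) ^ (2 * L)) ≤ (2 : ℝ) ^ j := by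
      rw [← Real.rpow_add (by norm_num), ← Real.rpow_add (by norm_num), ← Real.rpow_natCast]
      exact Real.rpow_le_rpow_of_exponent_le (by norm_num) (by linarith)
    have h5 : 128 * (1 / δ * (1 / p)) ≤ ((s * 2 ^ j : ℕ) : ℝ) := by
      calc 128 * (1 / δ * (1 / p))
          ≤ (2 : ℝ) ^ (14 * L) * ((2 : ℝ) ^ (2 * L) * (2 : ℝ) ^ (2 * L)) := by gcongr
        _ ≤ (2 : ℝ) ^ j := h4
        _ ≤ _ := by exact_mod_cast Nat.le_mul_of_pos_left _ hs
    calc (128 : ℝ) = 128 * (1 / δ * (1 / p)) * (δ * p) := by field_simp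
      _ ≤ _ := by gcongr
  obtain ⟨P₁, hP₁, hP₁₀, hP₁c, -⟩ := exists_equi_refinement P₀ hP₀ (partCol P₀)
    (fun u v h => (partCol_eq_iff P₀ u v).1 h) (2 ^ j) (by positivity) (by rw [hcard]; exact hjn)
    (by omega)
  rw [hcard] at hP₁c
  have hn0 : (0 : ℝ) < Fintype.card V := by
    have : 0 < Fintype.card V := lt_of_lt_of_le (by omega) hjn
    exact_mod_cast this
  rcases iterate_step G δ p hδ hp hS hf hanti s j H hH P₁ hP₁ (by rw [hP₁c]; exact h256)
    (by rw [hP₁c]; exact h128) (by rw [hP₁c]; exact two_pow_mul_le_iter hf s j) a hjaH with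
    ⟨G', h1, Z, hZ, hZP, h2, h3⟩ | ⟨P, -, -, -, -, hPe⟩
  · exact ⟨G', h1, Z, hZ, hZP.trans hP₁₀, h2, h3⟩
  · exfalso
    have hup := ent_nonpos (Prod.map (partCol P) (partCol P)) (adjFn G) (adjFn_nonneg G)
      (adjFn_le_one G)
    have hsum0 : 0 < ∑ x, adjFn G x := by rw [hS]; positivity
    have hlow := le_ent (Prod.map (partCol P₁) (partCol P₁)) (adjFn G) (adjFn_nonneg G) hsum0
    rw [hS, Fintype.card_prod] at hlow
    have hq : p * (Fintype.card V : ℝ) ^ 2 / ((Fintype.card V * Fintype.card V : ℕ) : ℝ) = p := by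
      push_cast; field_simp
    rw [hq] at hlow
    rw [one_div, Real.log_inv] at hL
    set m := p * (Fintype.card V : ℝ) ^ 2 with hm
    have hm0 : 0 < m := by positivity
    have h1 : m * Real.log p + a * (δ ^ 2 * m / 256) ≤ 0 := by linarith
    have h2 : m * Real.log p + a * (δ ^ 2 * m / 256) = (a - 256 * L) * (δ ^ 2 * m / 256) := by
      rw [show Real.log p = -(L * δ ^ 2) by linarith]; ring
    have h3 : 0 < (a - 256 * L) * (δ ^ 2 * m / 256) :=
      mul_pos (by linarith) (by positivity)
    linarith

/-- **Stronger form of the SRAL upper bound (Theorem 6.1 / SRAL2).**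
There is an absolute constant `C > 0` such that: for every `δ > 0`, positive integer `s`,
and decreasing `f : ℕ → (0,1)`, for any graph `G` of density `p > 0` and any equipartition
`P₀` of order `s`, one can add/remove at most `δ|E(G)|` edges to obtain a graph having an
`f`-regular equipartition refining `P₀` of order at most `F^{(h)}(s)`, where
`F(x) = 2^{x/f(x)}` and `h = ⌈C·log(1/p)/δ²⌉`. -/
theorem sral2_upper_bound :
    ∃ C : ℝ, 0 < C ∧
      ∀ δ : ℝ, 0 < δ →
      ∀ s : ℕ, 0 < s →
      ∀ f : ℕ → ℝ, (∀ n, f n ∈ Set.Ioo (0 : ℝ) 1) → Antitone f →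
      ∀ (V : Type) (_ : Fintype V) (_ : DecidableEq V) (G : SimpleGraph V) (p : ℝ),
        p = graphDensity G → 0 < p →
        ∀ P₀ : Finpartition (univ : Finset V), P₀.IsEquipartition → P₀.parts.card = s →
        ∃ G' : SimpleGraph V,
          ((symmDiff G.edgeSet G'.edgeSet).ncard : ℝ) ≤ δ * G.edgeSet.ncard ∧
          ∃ Z : Finpartition (univ : Finset V), Z.IsEquipartition ∧ Z ≤ P₀ ∧
            (∀ A ∈ Z.parts, ∀ B ∈ Z.parts, A ≠ B → RegPair G' (f Z.parts.card) A B) ∧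
            Z.parts.card ≤
              (fun x : ℕ => ⌈(2 : ℝ) ^ ((x : ℝ) / f x)⌉₊)^[⌈C * Real.log (1 / p) / δ ^ 2⌉₊] s := by
  refine ⟨600, by norm_num, ?_⟩
  intro δ hδ s hs f hf hanti V _ hdec G p hpG hp P₀ hP₀ hcard
  obtain rfl : hdec = fun a b => Classical.propDecidable (a = b) := Subsingleton.elim _ _
  change ∃ G' : SimpleGraph V, _ ∧ ∃ Z : Finpartition (univ : Finset V), _ ∧ _ ∧ _ ∧
    Z.parts.card ≤ (tower f)^[⌈600 * Real.log (1 / p) / δ ^ 2⌉₊] s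
  set H := ⌈600 * Real.log (1 / p) / δ ^ 2⌉₊ with hHdef
  have hsH : s ≤ (tower f)^[H] s := tower_iter_mono hf hanti s (Nat.zero_le H)
  have hn0 : (0 : ℝ) < Fintype.card V := by
    rcases (Nat.cast_nonneg (Fintype.card V) : (0 : ℝ) ≤ Fintype.card V).eq_or_lt with h | h
    · rw [hpG, graphDensity, ← h] at hp
      simp at hp
    · exact h
  have hE : (G.edgeSet.ncard : ℝ) = p * (Fintype.card V : ℝ) ^ 2 / 2 := by
    rw [hpG, graphDensity]; field_simp
  have hS : ∑ x, adjFn G x = p * (Fintype.card V : ℝ) ^ 2 := by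
    rw [sum_adjFn, hE]; ring
  rw [hE]
  set m := (Fintype.card V : ℝ) ^ 2 with hm
  have hm0 : 0 < m := by positivity
  rcases le_or_gt 1 δ with hδ1 | hδ1
  · -- For `δ ≥ 1` all edges may be deleted.
    refine ⟨⊥, ?_, P₀, hP₀, le_rfl, fun A _ B _ _ => regPair_bot _ (hf _).1 A B, by omega⟩
    rw [SimpleGraph.edgeSet_bot, Set.bot_eq_empty.symm, symmDiff_bot, hE]
    exact le_mul_of_one_le_left (by positivity) hδ1
  have hlog : Real.log (1 / p) = -Real.log p := by rw [one_div, Real.log_inv]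
  rcases le_or_gt (Real.log (1 / p)) (δ / 2) with hlp | hlp
  · -- For `p` close to `1` all missing edges may be added.
    refine ⟨⊤, (ncard_symmDiff_top G).trans ?_, P₀, hP₀, le_rfl, fun A hA B hB hAB =>
      regPair_top _ (hf _).1 A B (P₀.disjoint hA hB hAB) (P₀.nonempty_of_mem_parts hA)
        (P₀.nonempty_of_mem_parts hB), by omega⟩
    have h1 := Real.log_le_sub_one_of_pos hp
    have h2 : 1 - p ≤ δ / 2 := by linarith
    have h3 : 1 - p ≤ δ * p := by nlinarith
    rw [hE, ← hm]
    nlinarith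
  rcases le_or_gt (Fintype.card V) ((tower f)^[H] s) with hnH | hnH
  · -- A small vertex set is partitioned into singletons.
    refine ⟨G, ?_, ⊥, Finpartition.bot_isEquipartition _, bot_le, ?_, ?_⟩
    · rw [symmDiff_self, Set.bot_eq_empty, Set.ncard_empty, Nat.cast_zero]
      positivity
    · intro A hA B hB _
      rw [Finpartition.mem_bot_iff] at hA hB
      obtain ⟨a, -, rfl⟩ := hA
      obtain ⟨b, -, rfl⟩ := hB
      exact regPair_singleton G _ (hf _).1 a b
    · rw [Finpartition.card_bot, card_univ]
      exact hnH
  have hδsq : δ ^ 2 ≤ δ := by nlinarith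
  have hL0 : Real.log (1 / p) / δ ^ 2 * δ ^ 2 = Real.log (1 / p) := by field_simp
  have hLδ : δ / 2 / δ ^ 2 ≤ Real.log (1 / p) / δ ^ 2 := by gcongr
  have hLδ2 : δ / 2 / δ ^ 2 = 1 / δ / 2 := by field_simp
  have hinv : 1 ≤ 1 / δ := by rw [le_div_iff₀ hδ]; linarith
  refine large_case G δ p (Real.log (1 / p) / δ ^ 2) hδ hp hS hf hanti s H hs hnH.le hL0
    (by linarith) ?_ (by linarith) ?_ P₀ hP₀ hcard
  · rw [le_div_iff₀ (by positivity)]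
    nlinarith
  · rw [← mul_div_assoc]
    exact Nat.le_ceil _
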